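/- arXiv:2603.12765 — 5 statements merged into one kernel-verified Lean document; each statement's English description precedes it below -/
import Mathlib

section
/- (Local discrete Caccioppoli inequality.) Let 0<h<1/2, L>1, x₀ ∈ hℤ^d, let V : hℤ^d → ℝ, and let φ : hℤ^d → ℂ satisfy −Δ_h φ(x) + V(x)φ(x) = 0 for every x ∈ Q_{2L}(x₀)∩hℤ^d, with V bounded on Q_{2L}(x₀)∩hℤ^d. Then for each choice of sign, Σ_{j=1}^d ‖D_{j,h}^± φ‖²_{ℓ²(Q_L(x₀))} ≤ 2·(72/L² + sup_{x∈Q_{2L}(x₀)∩hℤ^d}|V(x)|)·‖φ‖²_{ℓ²(Q_{2L}(x₀))}. -/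
open scoped BigOperators
open MeasureTheory

noncomputable section

/-- The canonical basis vector `e j` of `ℤ^d`. -/
def latE (d : ℕ) (j : Fin d) : Fin d → ℤ := fun i => if i = j then 1 else 0

/-- The point `h•k ∈ hℤ^d ⊂ ℝ^d` associated with `k ∈ ℤ^d`. -/
def pt (d : ℕ) (h : ℝ) (k : Fin d → ℤ) : Fin d → ℝ := fun i => h * (k i : ℝ)

/-- Forward difference operator `D_{j,h}^+`. -/
def Dp (d : ℕ) (h : ℝ) (j : Fin d) (u : (Fin d → ℤ) → ℂ) (k : Fin d → ℤ) : ℂ :=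
  (u (k + latE d j) - u k) / (h : ℂ)

/-- Backward difference operator `D_{j,h}^-`. -/
def Dm (d : ℕ) (h : ℝ) (j : Fin d) (u : (Fin d → ℤ) → ℂ) (k : Fin d → ℤ) : ℂ :=
  (u k - u (k - latE d j)) / (h : ℂ)

/-- The discrete Laplacian `Δ_h` on `hℤ^d`. -/
def discLap (d : ℕ) (h : ℝ) (u : (Fin d → ℤ) → ℂ) (k : Fin d → ℤ) : ℂ :=
  ∑ j : Fin d, (u (k + latE d j) + u (k - latE d j) - 2 * u k) / ((h : ℂ)) ^ 2

/-- The averaging operator `M_j^-`. -/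
def Mminus (d : ℕ) (h : ℝ) (j : Fin d) (u : (Fin d → ℤ) → ℂ) (k : Fin d → ℤ) : ℂ :=
  (u (k - latE d j) + u k) / 2

/-!
For `u` with `Lu = W u`, where `L` is the unnormalised Laplacian, the identity
`L|u|² = |∇u|² + 2 Re (Lu · ū)` and summation by parts against a cutoff `η` give
`∑ η |∇u|² = ∑ (Lη) |u|² - 2 ∑ η W |u|²`. Only an *upper* bound on `Lη` is needed, so a cutoff
equal to the truncated square `min 1 (r²)` of a linear function `r` of the sup-norm distance works:
passing to the square makes the kink where `r = 0` harmless, whereas the kinks at `r = 1`, at the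
centre and along the diagonals are concave. As the sup norm is governed by a single coordinate, the
bound on `Lη` does not depend on the dimension.
-/

section Steps

lemma summable_mul_of_hasFiniteSupport {α : Type*} {η : α → ℝ} (hη : η.HasFiniteSupport)
    (f : α → ℝ) :
    Summable fun x => η x * f x :=
  summable_of_hasFiniteSupport (hη.mul_left f)

lemma sum_tsum_indicator_le_of_le {α ι : Type*} [Fintype ι] {S : Set α} (hS : S.Finite)
    {f g : ι → α → ℝ} (hfg : ∀ i x, f i x ≤ g i x) :
    ∑ i, ∑' x, S.indicator (f i) x ≤ ∑' x, S.indicator (fun x => ∑ i, g i x) x := by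
  have summable_indicator (f : α → ℝ) : Summable (S.indicator f) :=
    summable_of_hasFiniteSupport (hS.subset Set.support_indicator_subset)
  rw [← Summable.tsum_finsetSum fun i _ => summable_indicator (f i)]
  refine Summable.tsum_le_tsum (fun x => ?_) (summable_sum fun i _ => summable_indicator (f i))
    (summable_indicator _)
  by_cases hx : x ∈ S
  · simp only [Set.indicator_of_mem hx]
    exact Finset.sum_le_sum fun i _ => hfg i x
  · simp [hx]

variable {G ι E : Type*} [AddCommGroup G] [Fintype ι] (e : ι → G)

/-- The Laplacian of an abelian group with respect to the steps `±e i`. It is unnormalised, so that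
`h²Δ_h` is the case `e = latE d`, and its functions take values in any abelian group, so that it
applies to a solution, to its squared modulus and to a cutoff alike. -/
def stepLaplacian [AddCommGroup E] (u : G → E) (x : G) : E :=
  ∑ i, ((u (x + e i) - u x) + (u (x - e i) - u x))

/-- The energy density of `u` at `x`: the sum of the squared increments of `u` along all the
steps `±e i`. -/
def stepEnergy [SeminormedAddCommGroup E] (u : G → E) (x : G) : ℝ :=
  ∑ i, (‖u (x + e i) - u x‖ ^ 2 + ‖u x - u (x - e i)‖ ^ 2)

lemma stepEnergy_nonneg [SeminormedAddCommGroup E] (u : G → E) (x : G) : 0 ≤ stepEnergy e u x :=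
  Finset.sum_nonneg fun _ _ => by positivity

lemma stepLaplacian_norm_sq [SeminormedAddCommGroup E] [InnerProductSpace ℝ E]
    (u : G → E) (x : G) :
    stepLaplacian e (fun y => ‖u y‖ ^ 2) x =
      stepEnergy e u x + 2 * inner ℝ (stepLaplacian e u x) (u x) := by
  have increment (a c : E) : ‖a‖ ^ 2 - ‖c‖ ^ 2 = ‖a - c‖ ^ 2 + 2 * inner ℝ (a - c) c := by
    rw [norm_sub_sq_real, inner_sub_left, real_inner_self_eq_norm_sq]
    ring
  simp only [stepLaplacian, stepEnergy, sum_inner, Finset.mul_sum, ← Finset.sum_add_distrib]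
  refine Finset.sum_congr rfl fun i _ => ?_
  rw [increment, increment, inner_add_left, norm_sub_rev (u x)]
  ring

lemma hasFiniteSupport_increment [AddCommGroup E] {η : G → E} (hη : η.HasFiniteSupport) (a : G) :
    (fun x => η (x + a) - η x).HasFiniteSupport :=
  Function.HasFiniteSupport.fun_sub (hη.preimage (add_left_injective a).injOn) hη

lemma hasFiniteSupport_stepLaplacian [AddCommGroup E] {η : G → E} (hη : η.HasFiniteSupport) :
    (stepLaplacian e η).HasFiniteSupport := by
  unfold stepLaplacian
  simp only [sub_eq_add_neg _ (e _)]
  exact .sum (fun i => .fun_add (hasFiniteSupport_increment hη (e i))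
    (hasFiniteSupport_increment hη (-e i))) _

lemma tsum_mul_increment {η : G → ℝ} (hη : η.HasFiniteSupport) (f : G → ℝ) (a : G) :
    ∑' x, η x * (f (x + a) - f x) = ∑' x, (η (x + -a) - η x) * f x := by
  have hη_shift : (fun x => η (x + -a)).HasFiniteSupport :=
    hη.preimage (add_left_injective (-a)).injOn
  have translate : ∑' x, η x * f (x + a) = ∑' x, η (x + -a) * f x := by
    simpa using (Equiv.addRight a).tsum_eq fun x => η (x + -a) * f x
  simp only [mul_sub, sub_mul]
  rw [(summable_mul_of_hasFiniteSupport hη _).tsum_sub (summable_mul_of_hasFiniteSupport hη _),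
    (summable_mul_of_hasFiniteSupport hη_shift _).tsum_sub
      (summable_mul_of_hasFiniteSupport hη _), translate]

lemma tsum_mul_stepLaplacian {η : G → ℝ} (hη : η.HasFiniteSupport) (f : G → ℝ) :
    ∑' x, η x * stepLaplacian e f x = ∑' x, stepLaplacian e η x * f x := by
  have summable_η (g : G → ℝ) := summable_mul_of_hasFiniteSupport hη g
  have summable_increment (a : G) :=
    summable_mul_of_hasFiniteSupport (hasFiniteSupport_increment hη a) f
  simp only [stepLaplacian, sub_eq_add_neg _ (e _), Finset.mul_sum, Finset.sum_mul, mul_add,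
    add_mul]
  rw [Summable.tsum_finsetSum fun i _ => (summable_η _).add (summable_η _),
    Summable.tsum_finsetSum fun i _ => (summable_increment _).add (summable_increment _)]
  refine Finset.sum_congr rfl fun i _ => ?_
  rw [(summable_η _).tsum_add (summable_η _),
    (summable_increment _).tsum_add (summable_increment _), tsum_mul_increment hη f (e i),
    tsum_mul_increment hη f (-e i), neg_neg, add_comm]

theorem tsum_mul_stepEnergy_le [SeminormedAddCommGroup E] [InnerProductSpace ℝ E]
    {S : Set G} (hS : S.Finite) {η : G → ℝ} (hη₀ : ∀ x, 0 ≤ η x) (hη₁ : ∀ x, η x ≤ 1)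
    (hηS : ∀ x ∉ S, η x = 0) {A : ℝ} (hΔη : ∀ x ∈ S, stepLaplacian e η x ≤ A)
    (hΔηS : ∀ x ∉ S, stepLaplacian e η x ≤ 0) {u : G → E} {W : ℝ} (hW : 0 ≤ W)
    (hu : ∀ x ∈ S, -(W * ‖u x‖ ^ 2) ≤ inner ℝ (stepLaplacian e u x) (u x)) :
    ∑' x, η x * stepEnergy e u x ≤ (A + 2 * W) * ∑' x, S.indicator (fun y => ‖u y‖ ^ 2) x := by
  have hη : η.HasFiniteSupport := hS.subset (Function.support_subset_iff'.2 hηS)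
  have summable_η (g : G → ℝ) := summable_mul_of_hasFiniteSupport hη g
  have summable_Δη := summable_mul_of_hasFiniteSupport (hasFiniteSupport_stepLaplacian e hη)
    fun x => ‖u x‖ ^ 2
  have pointwise (x : G) :
      stepLaplacian e η x * ‖u x‖ ^ 2 - η x * (2 * inner ℝ (stepLaplacian e u x) (u x)) ≤
        (A + 2 * W) * S.indicator (fun y => ‖u y‖ ^ 2) x := by
    by_cases hx : x ∈ S
    · have laplacian_le := mul_le_mul_of_nonneg_right (hΔη x hx) (sq_nonneg ‖u x‖)
      have inner_ge := mul_le_mul_of_nonneg_left (hu x hx) (hη₀ x)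
      have weight_le :=
        mul_le_mul_of_nonneg_right (hη₁ x) (mul_nonneg hW (sq_nonneg ‖u x‖))
      rw [Set.indicator_of_mem hx]
      linarith
    · rw [Set.indicator_of_notMem hx, hηS x hx]
      simpa using mul_nonpos_of_nonpos_of_nonneg (hΔηS x hx) (sq_nonneg ‖u x‖)
  calc ∑' x, η x * stepEnergy e u x
      = ∑' x, (stepLaplacian e η x * ‖u x‖ ^ 2
          - η x * (2 * inner ℝ (stepLaplacian e u x) (u x))) := by
        rw [summable_Δη.tsum_sub (summable_η _), ← tsum_mul_stepLaplacian e hη,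
          ← (summable_η _).tsum_sub (summable_η _)]
        simp only [stepLaplacian_norm_sq, mul_add, add_sub_cancel_right]
    _ ≤ (A + 2 * W) * ∑' x, S.indicator (fun y => ‖u y‖ ^ 2) x := by
        rw [← tsum_mul_left]
        exact Summable.tsum_le_tsum pointwise (summable_Δη.sub (summable_η _))
          ((summable_of_hasFiniteSupport (hS.subset Set.support_indicator_subset)).mul_left _)

end Steps

section Cutoff

/-- The profile of the cutoff: the square of the truncation of `x` to `[0, 1]`. -/
def quadRamp (x : ℝ) : ℝ := min 1 (max 0 x ^ 2)

lemma quadRamp_nonneg (x : ℝ) : 0 ≤ quadRamp x := le_min zero_le_one (sq_nonneg _)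

lemma quadRamp_le_one (x : ℝ) : quadRamp x ≤ 1 := min_le_left _ _

lemma quadRamp_of_nonpos {x : ℝ} (hx : x ≤ 0) : quadRamp x = 0 := by
  simp [quadRamp, max_eq_left hx]

lemma quadRamp_of_one_le {x : ℝ} (hx : 1 ≤ x) : quadRamp x = 1 :=
  min_eq_left (one_le_pow₀ (hx.trans (le_max_right _ _)))

lemma monotone_quadRamp : Monotone quadRamp := fun x y hxy => by
  unfold quadRamp
  gcongr

lemma sq_max_zero_add_add_sq_max_zero_sub_le (x δ : ℝ) :
    max 0 (x + δ) ^ 2 + max 0 (x - δ) ^ 2 ≤ 2 * max 0 x ^ 2 + 2 * δ ^ 2 := by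
  rcases max_cases 0 (x + δ) with ⟨h₁, _⟩ | ⟨h₁, _⟩ <;>
    rcases max_cases 0 (x - δ) with ⟨h₂, _⟩ | ⟨h₂, _⟩ <;>
    rcases max_cases 0 x with ⟨h₃, _⟩ | ⟨h₃, _⟩ <;>
    rw [h₁, h₂, h₃] <;> nlinarith [sq_nonneg (x - δ), sq_nonneg (x + δ)]

lemma quadRamp_add_add_quadRamp_sub_le (x δ : ℝ) :
    quadRamp (x + δ) + quadRamp (x - δ) ≤ 2 * quadRamp x + 2 * δ ^ 2 := by
  rcases min_cases 1 (max 0 x ^ 2) with ⟨saturated, _⟩ | ⟨unsaturated, _⟩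
  · have := quadRamp_le_one (x + δ)
    have := quadRamp_le_one (x - δ)
    rw [quadRamp.eq_1 x, saturated]
    linarith [sq_nonneg δ]
  · rw [quadRamp.eq_1 x, unsaturated]
    exact (add_le_add (min_le_right _ _) (min_le_right _ _)).trans
      (sq_max_zero_add_add_sq_max_zero_sub_le x δ)

variable {d : ℕ}

lemma latE_eq_single (j : Fin d) : latE d j = Pi.single j 1 := by
  ext i
  simp [latE, Pi.single_apply]

lemma norm_latE (j : Fin d) : ‖latE d j‖ = 1 := by
  rw [latE_eq_single, Pi.norm_single, norm_one]

lemma add_comp_abs_le_of_antitone {f : ℝ → ℝ} (hf : Antitone f) (x : ℝ) :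
    f |x + 1| + f |x - 1| ≤ f (|x| + 1) + f (|x| - 1) := by
  rcases le_total 0 x with hx | hx
  · rw [abs_of_nonneg hx, abs_of_nonneg (by linarith : 0 ≤ x + 1)]
    gcongr
    exact hf (le_abs_self _)
  · rw [abs_of_nonpos hx, abs_of_nonpos (by linarith : x - 1 ≤ 0), add_comm,
      show -(x - 1) = -x + 1 by ring]
    gcongr
    exact hf ((by ring : -x - 1 = -(x + 1)).trans_le (neg_le_abs _))

/-- Only the steps along a coordinate attaining the sup norm can increase the function. -/
lemma stepLaplacian_comp_norm_le {f : ℝ → ℝ} (hf : Antitone f) {A : ℝ} (hA : 0 ≤ A)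
    (hfA : ∀ t, f (t + 1) + f (t - 1) ≤ 2 * f t + A) (c k : Fin d → ℤ) :
    stepLaplacian (latE d) (fun l => f ‖l - c‖) k ≤ A := by
  rcases isEmpty_or_nonempty (Fin d) with _ | _
  · simpa [stepLaplacian] using hA
  obtain ⟨i, hi⟩ := (IsGreatest.pi_norm (k - c)).1
  have le_at_i (l : Fin d → ℤ) : f ‖l - c‖ ≤ f |(l i - c i : ℝ)| := by
    simpa [Int.norm_eq_abs] using hf (norm_le_pi_norm (l - c) i)
  have eq_at_i : f ‖k - c‖ = f |(k i - c i : ℝ)| := by simp [← hi, Int.norm_eq_abs]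
  have term_le (j : Fin d) : (f ‖k + latE d j - c‖ - f ‖k - c‖) +
      (f ‖k - latE d j - c‖ - f ‖k - c‖) ≤ if i = j then A else 0 := by
    have forward := le_at_i (k + latE d j)
    have backward := le_at_i (k - latE d j)
    rw [eq_at_i]
    split_ifs with hij
    · have second_difference := (add_comp_abs_le_of_antitone hf (k i - c i)).trans (hfA _)
      simp only [latE, hij, Pi.add_apply, Pi.sub_apply, if_true, Int.cast_add, Int.cast_sub,
        Int.cast_one, add_sub_right_comm, sub_right_comm _ (1 : ℝ)]
        at forward backward second_difference ⊢
      linarith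
    · simp only [latE, hij, Pi.add_apply, Pi.sub_apply, if_false, add_zero, sub_zero]
        at forward backward
      linarith
  exact (Finset.sum_le_sum fun j _ => term_le j).trans (by simp)

/-- The cutoff on `ℤ^d` with centre `c`: it is `1` up to sup-norm distance `m` from `c`, vanishes
from distance `n` on, and is the square of a linear function of the distance in between. -/
def boxCutoff (c : Fin d → ℤ) (m n : ℕ) (k : Fin d → ℤ) : ℝ :=
  quadRamp ((n - ‖k - c‖) / (n - m))

variable {c k : Fin d → ℤ} {m n : ℕ}

lemma boxCutoff_eq_one (hmn : m < n) (hk : ‖k - c‖ ≤ m) : boxCutoff c m n k = 1 := by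
  have : (m : ℝ) < n := by exact_mod_cast hmn
  refine quadRamp_of_one_le ((one_le_div (sub_pos.2 this)).2 ?_)
  linarith

lemma boxCutoff_eq_zero (hmn : m < n) (hk : n ≤ ‖k - c‖) : boxCutoff c m n k = 0 := by
  have : (m : ℝ) < n := by exact_mod_cast hmn
  exact quadRamp_of_nonpos (div_nonpos_of_nonpos_of_nonneg (by linarith) (by linarith))

lemma stepLaplacian_boxCutoff_le (hmn : m < n) :
    stepLaplacian (latE d) (boxCutoff c m n) k ≤ 2 / (n - m : ℝ) ^ 2 := by
  have : (0 : ℝ) < n - m := by simpa using hmn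
  refine stepLaplacian_comp_norm_le (f := fun t => quadRamp ((n - t) / (n - m)))
    (fun s t hst => monotone_quadRamp (by gcongr)) (by positivity) (fun t => ?_) c k
  have second_difference := quadRamp_add_add_quadRamp_sub_le ((n - t) / (n - m)) (1 / (n - m))
  rwa [← add_div, ← sub_div, add_comm (quadRamp _), one_div, inv_pow, ← div_eq_mul_inv,
    sub_sub, sub_add] at second_difference

lemma norm_add_one_le_natCast_of_lt (hk : ‖k‖ < n) : ‖k‖ + 1 ≤ n := by
  have hn : (1 : ℝ) ≤ n := by
    exact_mod_cast (by exact_mod_cast (norm_nonneg k).trans_lt hk : 0 < n)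
  rw [← le_sub_iff_add_le, pi_norm_le_iff_of_nonneg (sub_nonneg.2 hn)]
  intro i
  have hki : ‖k i‖ < n := (norm_le_pi_norm k i).trans_lt hk
  rw [Int.norm_eq_abs] at hki ⊢
  rw [le_sub_iff_add_le]
  exact_mod_cast hki

lemma stepLaplacian_boxCutoff_eq_zero (hmn : m < n) (hk : k ∉ Metric.closedBall c n) :
    stepLaplacian (latE d) (boxCutoff c m n) k = 0 := by
  rw [mem_closedBall_iff_norm, not_le] at hk
  have neighbour_eq_zero {l : Fin d → ℤ} (hl : ‖k - l‖ = 1) : boxCutoff c m n l = 0 := by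
    refine boxCutoff_eq_zero hmn (le_of_not_gt fun hlc => ?_)
    have := norm_sub_le_norm_sub_add_norm_sub k l c
    linarith [norm_add_one_le_natCast_of_lt hlc]
  refine Finset.sum_eq_zero fun j _ => ?_
  have forward : boxCutoff c m n (k + latE d j) = 0 := neighbour_eq_zero (by simp [norm_latE])
  have backward : boxCutoff c m n (k - latE d j) = 0 := neighbour_eq_zero (by simp [norm_latE])
  simp [forward, backward, boxCutoff_eq_zero hmn hk.le]

theorem tsum_closedBall_stepEnergy_le {E : Type*} [SeminormedAddCommGroup E]
    [InnerProductSpace ℝ E] (hmn : m < n) {u : (Fin d → ℤ) → E} {W : ℝ} (hW : 0 ≤ W)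
    (hu : ∀ k ∈ Metric.closedBall c n,
      -(W * ‖u k‖ ^ 2) ≤ inner ℝ (stepLaplacian (latE d) u k) (u k)) :
    ∑' k, (Metric.closedBall c m).indicator (stepEnergy (latE d) u) k ≤
      (2 / (n - m : ℝ) ^ 2 + 2 * W) *
        ∑' k, (Metric.closedBall c n).indicator (fun k => ‖u k‖ ^ 2) k := by
  have finite_ball (r : ℝ) : (Metric.closedBall c r).Finite :=
    (isCompact_closedBall c r).finite_of_discrete
  have cutoff_eq_zero : ∀ k ∉ Metric.closedBall c n, boxCutoff c m n k = 0 := fun k hk =>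
    boxCutoff_eq_zero hmn (not_lt.1 fun h => hk (mem_closedBall_iff_norm.2 h.le))
  have indicator_le (k : Fin d → ℤ) : (Metric.closedBall c m).indicator (stepEnergy (latE d) u) k ≤
      boxCutoff c m n k * stepEnergy (latE d) u k := by
    refine Set.indicator_apply_le' (fun hk => ?_)
      fun _ => mul_nonneg (quadRamp_nonneg _) (stepEnergy_nonneg _ _ _)
    rw [boxCutoff_eq_one hmn (mem_closedBall_iff_norm.1 hk), one_mul]
  calc ∑' k, (Metric.closedBall c m).indicator (stepEnergy (latE d) u) k
      ≤ ∑' k, boxCutoff c m n k * stepEnergy (latE d) u k :=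
        Summable.tsum_le_tsum indicator_le
          (summable_of_hasFiniteSupport ((finite_ball m).subset Set.support_indicator_subset))
          (summable_mul_of_hasFiniteSupport
            ((finite_ball n).subset (Function.support_subset_iff'.2 cutoff_eq_zero)) _)
    _ ≤ _ := tsum_mul_stepEnergy_le (latE d) (finite_ball n) (fun _ => quadRamp_nonneg _)
        (fun _ => quadRamp_le_one _) cutoff_eq_zero (fun _ _ => stepLaplacian_boxCutoff_le hmn)
        (fun _ hk => (stepLaplacian_boxCutoff_eq_zero hmn hk).le) hW hu

end Cutoff

section Rescaling

variable {d : ℕ} {h L : ℝ} {c : Fin d → ℤ}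

lemma stepEnergy_latE (hh : h ≠ 0) (φ : (Fin d → ℤ) → ℂ) (k : Fin d → ℤ) :
    stepEnergy (latE d) φ k = h ^ 2 * ∑ j, (‖Dp d h j φ k‖ ^ 2 + ‖Dm d h j φ k‖ ^ 2) := by
  rw [stepEnergy, Finset.mul_sum]
  refine Finset.sum_congr rfl fun j _ => ?_
  simp only [Dp, Dm, norm_div, Complex.norm_real, div_pow, Real.norm_eq_abs, sq_abs]
  field_simp

lemma stepLaplacian_latE (hh : h ≠ 0) (φ : (Fin d → ℤ) → ℂ) (k : Fin d → ℤ) :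
    stepLaplacian (latE d) φ k = (h : ℂ) ^ 2 * discLap d h φ k := by
  have : (h : ℂ) ≠ 0 := by exact_mod_cast hh
  rw [stepLaplacian, discLap, Finset.mul_sum]
  refine Finset.sum_congr rfl fun j _ => ?_
  field_simp
  ring

lemma inner_stepLaplacian_latE_of_eq (hh : h ≠ 0) {v : ℝ} {φ : (Fin d → ℤ) → ℂ} {k : Fin d → ℤ}
    (heq : -discLap d h φ k + (v : ℂ) * φ k = 0) :
    inner ℝ (stepLaplacian (latE d) φ k) (φ k) = h ^ 2 * v * ‖φ k‖ ^ 2 := by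
  have eq_smul : stepLaplacian (latE d) φ k = (h ^ 2 * v) • φ k := by
    rw [stepLaplacian_latE hh, Complex.real_smul]
    push_cast
    linear_combination -(h : ℂ) ^ 2 * heq
  rw [eq_smul, real_inner_smul_left, real_inner_self_eq_norm_sq]

lemma forall_abs_sub_le_iff_mem_closedBall {R : ℝ} (hh : 0 < h) (hR : 0 ≤ R) (k : Fin d → ℤ) :
    (∀ i, |h * (k i : ℝ) - h * (c i : ℝ)| ≤ R) ↔ k ∈ Metric.closedBall c ⌊R / h⌋₊ := by
  rw [mem_closedBall_iff_norm, pi_norm_le_iff_of_nonneg (Nat.cast_nonneg _)]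
  refine forall_congr' fun i => ?_
  rw [Int.norm_eq_abs, ← Int.cast_abs, ← Nat.cast_natAbs, Nat.cast_le,
    Nat.le_floor_iff (div_nonneg hR hh.le), Nat.cast_natAbs, le_div_iff₀' hh, ← mul_sub, abs_mul,
    abs_of_pos hh]
  simp

lemma indicator_cube_pt {R : ℝ} (hh : 0 < h) (hR : 0 ≤ R) (f : (Fin d → ℤ) → ℝ) (k : Fin d → ℤ) :
    Set.indicator {x : Fin d → ℝ | ∀ i, |x i - h * (c i : ℝ)| ≤ R} (fun _ => f k) (pt d h k) =
      (Metric.closedBall c ⌊R / h⌋₊).indicator f k := by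
  have mem_iff : pt d h k ∈ {x : Fin d → ℝ | ∀ i, |x i - h * (c i : ℝ)| ≤ R} ↔
      k ∈ Metric.closedBall c ⌊R / h⌋₊ := forall_abs_sub_le_iff_mem_closedBall hh hR k
  classical
  simp only [Set.indicator_apply, mem_iff]

lemma le_three_mul_floor_sub_floor_half {t : ℝ} (ht : 1 ≤ t) :
    t ≤ 3 * (⌊t⌋₊ - ⌊t / 2⌋₊ : ℝ) := by
  have floor_pos : 1 ≤ ⌊t⌋₊ := Nat.one_le_floor_iff t |>.2 ht
  have floor_add_one_le : ⌊t⌋₊ + 1 + 3 * ⌊t / 2⌋₊ ≤ 3 * ⌊t⌋₊ := by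
    rw [Nat.floor_div_ofNat]
    omega
  have : (⌊t⌋₊ + 1 + 3 * ⌊t / 2⌋₊ : ℝ) ≤ 3 * ⌊t⌋₊ := by exact_mod_cast floor_add_one_le
  linarith [Nat.lt_floor_add_one t]

theorem tsum_closedBall_gradient_le (hh : 0 < h) (hhL : h ≤ L) {V : (Fin d → ℤ) → ℝ}
    {φ : (Fin d → ℤ) → ℂ}
    (heq : ∀ k ∈ Metric.closedBall c ⌊L / h⌋₊, -discLap d h φ k + (V k : ℂ) * φ k = 0)
    {M : ℝ} (hM : 0 ≤ M) (hV : ∀ k ∈ Metric.closedBall c ⌊L / h⌋₊, -M ≤ V k) :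
    ∑' k, (Metric.closedBall c ⌊L / 2 / h⌋₊).indicator
        (fun k => ∑ j, (‖Dp d h j φ k‖ ^ 2 + ‖Dm d h j φ k‖ ^ 2)) k ≤
      2 * (9 / L ^ 2 + M) *
        ∑' k, (Metric.closedBall c ⌊L / h⌋₊).indicator (fun k => ‖φ k‖ ^ 2) k := by
  have width_ge := le_three_mul_floor_sub_floor_half ((one_le_div hh).2 hhL)
  rw [div_right_comm] at width_ge
  set n := ⌊L / h⌋₊
  set m := ⌊L / 2 / h⌋₊
  have hL : 0 < L := hh.trans_le hhL
  have width_pos : (0 : ℝ) < n - m := by linarith [div_pos hL hh]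
  have inner_ge : ∀ k ∈ Metric.closedBall c n,
      -(h ^ 2 * M * ‖φ k‖ ^ 2) ≤ inner ℝ (stepLaplacian (latE d) φ k) (φ k) := fun k hk => by
    rw [inner_stepLaplacian_latE_of_eq hh.ne' (heq k hk), ← neg_mul, ← mul_neg]
    gcongr
    exact hV k hk
  have cutoff_cost : 2 / (n - m : ℝ) ^ 2 ≤ h ^ 2 * (18 / L ^ 2) := by
    rw [div_le_iff₀ hh] at width_ge
    rw [mul_div_assoc', div_le_div_iff₀ (by positivity) (by positivity)]
    nlinarith [pow_le_pow_left₀ hL.le width_ge 2]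
  have energy_le := tsum_closedBall_stepEnergy_le (by exact_mod_cast sub_pos.1 width_pos)
    (by positivity) inner_ge
  simp only [funext (stepEnergy_latE hh.ne' φ), Set.indicator_const_mul, tsum_mul_left]
    at energy_le
  refine le_of_mul_le_mul_left (energy_le.trans ?_) (pow_pos hh 2)
  have constant_le : 2 / (n - m : ℝ) ^ 2 + 2 * (h ^ 2 * M) ≤ h ^ 2 * (2 * (9 / L ^ 2 + M)) := by
    linear_combination cutoff_cost
  exact (mul_le_mul_of_nonneg_right constant_le
    (tsum_nonneg <| Set.indicator_nonneg fun k _ => sq_nonneg ‖φ k‖)).trans_eq (mul_assoc _ _ _)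

end Rescaling

theorem stmt_4_general (d : ℕ) (h L : ℝ) (hh : 0 < h) (hhL : h ≤ L)
    (k₀ : Fin d → ℤ) (V : (Fin d → ℤ) → ℝ) (φ : (Fin d → ℤ) → ℂ)
    (heq : ∀ k : Fin d → ℤ, (∀ i, |h * (k i : ℝ) - h * (k₀ i : ℝ)| ≤ L) →
      -discLap d h φ k + (V k : ℂ) * φ k = 0)
    (M : ℝ) (hM : 0 ≤ M)
    (hV : ∀ k : Fin d → ℤ, (∀ i, |h * (k i : ℝ) - h * (k₀ i : ℝ)| ≤ L) → -M ≤ V k) :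
    ((∑ j : Fin d, ∑' k, Set.indicator {x : Fin d → ℝ | ∀ i, |x i - h * (k₀ i : ℝ)| ≤ L / 2}
          (fun _ => ‖Dp d h j φ k‖ ^ 2) (pt d h k))
        ≤ 2 * (9 / L ^ 2 + M) *
          ∑' k, Set.indicator {x : Fin d → ℝ | ∀ i, |x i - h * (k₀ i : ℝ)| ≤ L}
            (fun _ => ‖φ k‖ ^ 2) (pt d h k)) ∧
    ((∑ j : Fin d, ∑' k, Set.indicator {x : Fin d → ℝ | ∀ i, |x i - h * (k₀ i : ℝ)| ≤ L / 2}
          (fun _ => ‖Dm d h j φ k‖ ^ 2) (pt d h k))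
        ≤ 2 * (9 / L ^ 2 + M) *
          ∑' k, Set.indicator {x : Fin d → ℝ | ∀ i, |x i - h * (k₀ i : ℝ)| ≤ L}
            (fun _ => ‖φ k‖ ^ 2) (pt d h k)) := by
  have hL : 0 ≤ L := hh.le.trans hhL
  have hL_half : 0 ≤ L / 2 := by positivity
  have gradient_le := tsum_closedBall_gradient_le hh hhL
    (fun k hk => heq k ((forall_abs_sub_le_iff_mem_closedBall hh hL k).2 hk)) hM
    (fun k hk => hV k ((forall_abs_sub_le_iff_mem_closedBall hh hL k).2 hk))
  have finite_ball := (isCompact_closedBall k₀ (⌊L / 2 / h⌋₊ : ℝ)).finite_of_discrete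
  simp only [indicator_cube_pt hh hL fun k => ‖φ k‖ ^ 2,
    fun j => indicator_cube_pt (c := k₀) hh hL_half fun k => ‖Dp d h j φ k‖ ^ 2,
    fun j => indicator_cube_pt (c := k₀) hh hL_half fun k => ‖Dm d h j φ k‖ ^ 2]
  exact ⟨(sum_tsum_indicator_le_of_le finite_ball fun _ _ =>
      le_add_of_nonneg_right (sq_nonneg _)).trans gradient_le,
    (sum_tsum_indicator_le_of_le finite_ball fun _ _ =>
      le_add_of_nonneg_left (sq_nonneg _)).trans gradient_le⟩

/-- Local discrete Caccioppoli inequality on cubes `Q_L(x₀) ⊂ Q_{2L}(x₀)`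
for solutions of `−Δ_hφ + Vφ = 0` in `Q_{2L}(x₀)`, for both difference operators. -/
theorem stmt_4 (d : ℕ) (h L : ℝ) (hh0 : 0 < h) (hh : h < 1 / 2) (hL : 1 < L)
    (k₀ : Fin d → ℤ) (V : (Fin d → ℤ) → ℝ) (φ : (Fin d → ℤ) → ℂ)
    (heq : ∀ k : Fin d → ℤ, (∀ i, |h * (k i : ℝ) - h * (k₀ i : ℝ)| ≤ L) →
      -discLap d h φ k + (V k : ℂ) * φ k = 0)
    (M : ℝ) (hM : ∀ k : Fin d → ℤ, (∀ i, |h * (k i : ℝ) - h * (k₀ i : ℝ)| ≤ L) → |V k| ≤ M) :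
    ((∑ j : Fin d, ∑' k, Set.indicator {x : Fin d → ℝ | ∀ i, |x i - h * (k₀ i : ℝ)| ≤ L / 2}
          (fun _ => ‖Dp d h j φ k‖ ^ 2) (pt d h k))
        ≤ 2 * (72 / L ^ 2 + M) *
          ∑' k, Set.indicator {x : Fin d → ℝ | ∀ i, |x i - h * (k₀ i : ℝ)| ≤ L}
            (fun _ => ‖φ k‖ ^ 2) (pt d h k)) ∧
    ((∑ j : Fin d, ∑' k, Set.indicator {x : Fin d → ℝ | ∀ i, |x i - h * (k₀ i : ℝ)| ≤ L / 2}
          (fun _ => ‖Dm d h j φ k‖ ^ 2) (pt d h k))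
        ≤ 2 * (72 / L ^ 2 + M) *
          ∑' k, Set.indicator {x : Fin d → ℝ | ∀ i, |x i - h * (k₀ i : ℝ)| ≤ L}
            (fun _ => ‖φ k‖ ^ 2) (pt d h k)) := by
  have hM₀ : 0 ≤ M := (abs_nonneg _).trans (hM k₀ fun _ => by simpa using by linarith)
  have constant_le : 2 * (9 / L ^ 2 + M) ≤ 2 * (72 / L ^ 2 + M) := by gcongr; norm_num
  refine (stmt_4_general d h L hh0 (by linarith) k₀ V φ heq M hM₀
    fun k hk => neg_le_of_abs_le (hM k hk)).imp (·.trans ?_) (·.trans ?_) <;>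
  exact mul_le_mul_of_nonneg_right constant_le
    (tsum_nonneg fun _ => Set.indicator_nonneg (fun _ _ => sq_nonneg _) _)
end
end

section
/- (Two-sided ℓ² bound for the discrete heat kernel.) Let 0<T_−<T_+. Then there exist h₀>0 and κ>0, depending only on d, T_− and T_+, such that for every t with T_− ≤ t ≤ T_+, every 0<h<h₀ and every y ∈ hℤ^d, 1/κ ≤ ( Σ_{x∈hℤ^d} h^d·p_{d,h}(t,x,y)² )^{1/2} ≤ κ. -/
open scoped BigOperators
open MeasureTheory

noncomputable section

/-- The discrete heat kernel on `hℤ^d` (at lattice points `hk`, `hm`):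
`p_{d,h}(t,x,y) = (2π)^{−d} ∫_{[−π/h,π/h]^d} exp(−2t h^{−2} Σ_j (1−cos(hξ_j)))·e^{i(x−y)·ξ} dξ`
(the integral is real, so we take its real part). -/
def heatKer (d : ℕ) (h t : ℝ) (k m : Fin d → ℤ) : ℝ :=
  ((2 * Real.pi) ^ d)⁻¹ *
    (∫ ξ in Set.Icc (fun _ : Fin d => -(Real.pi / h)) (fun _ => Real.pi / h),
      Complex.exp (((-(2 * t / h ^ 2) * ∑ j, (1 - Real.cos (h * ξ j)) : ℝ) : ℂ)
        + Complex.I * ((∑ j, (h * (k j : ℝ) - h * (m j : ℝ)) * ξ j : ℝ) : ℂ))).re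

/-- The one-dimensional unscaled kernel
`𝔭₁(τ,u) = (2π)^{−1} ∫_{−π}^{π} e^{−2τ(1−cos η)} e^{iuη} dη`. -/
def p1ker (τ : ℝ) (u : ℤ) : ℝ :=
  (2 * Real.pi)⁻¹ *
    (∫ η in (-Real.pi)..Real.pi,
      Complex.exp (((-(2 * τ) * (1 - Real.cos η) : ℝ) : ℂ)
        + Complex.I * (u : ℂ) * (η : ℂ))).re

/-!
The multiplier `exp (-(2t/h²) ∑ⱼ (1 - cos (h ξⱼ)))` is a product over the coordinates, so the kernel
is a product of one-dimensional kernels, whose values at `h n` are `h⁻¹` times the Fourier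
coefficients of the one-dimensional multiplier on `[-π/h, π/h]`. Squaring the multiplier doubles the
time, so Parseval's identity turns the squared `ℓ²` norm of the kernel at time `t` into its value on
the diagonal at time `2t`. There, `(2/π²) ξ² ≤ h⁻² (1 - cos (h ξ)) ≤ ξ²/2` for `|ξ| ≤ π/h` compares
the multiplier with Gaussians, which gives bounds uniform in `h` from above, and also from below as
long as the frequency interval `[-π/h, π/h]` does not shrink to a point.
-/

section General

lemma summable_norm_and_hasSum_prod_apply_fin {R : Type*} [NormedCommRing R] [CompleteSpace R]
    {n : ℕ} {κ : Fin n → Type*} {f : ∀ i, κ i → R} {s : Fin n → R}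
    (hnorm : ∀ i, Summable fun k => ‖f i k‖) (hsum : ∀ i, HasSum (f i) (s i)) :
    (Summable fun x : ∀ i, κ i => ‖∏ i, f i (x i)‖) ∧
      HasSum (fun x : ∀ i, κ i => ∏ i, f i (x i)) (∏ i, s i) := by
  induction n with
  | zero => exact ⟨.of_finite, by simp⟩
  | succ n ih =>
    obtain ⟨ih_norm, ih_sum⟩ :=
      ih (f := fun i => f i.succ) (fun i => hnorm i.succ) (fun i => hsum i.succ)
    have norm_mul := (hnorm 0).mul_norm ih_norm
    have sum_mul := (hsum 0).mul ih_sum norm_mul.of_norm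
    rw [← (Fin.consEquiv κ).summable_iff, ← (Fin.consEquiv κ).hasSum_iff]
    simp only [Function.comp_def, Fin.prod_univ_succ, Fin.consEquiv_apply, Fin.cons_zero,
      Fin.cons_succ]
    exact ⟨norm_mul, sum_mul⟩

variable {ι : Type*} [Fintype ι]

lemma hasSum_prod_apply {R : Type*} [NormedCommRing R] [CompleteSpace R] {κ : ι → Type*}
    {f : ∀ i, κ i → R} {s : ι → R} (hnorm : ∀ i, Summable fun k => ‖f i k‖)
    (hsum : ∀ i, HasSum (f i) (s i)) :
    HasSum (fun x : ∀ i, κ i => ∏ i, f i (x i)) (∏ i, s i) := by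
  let e := (Fintype.equivFin ι).symm
  rw [← (Equiv.piCongrLeft κ e).hasSum_iff, ← e.prod_comp s]
  simpa only [Function.comp_def, ← e.prod_comp, Equiv.piCongrLeft_apply_apply] using
    (summable_norm_and_hasSum_prod_apply_fin (fun i => hnorm (e i)) (fun i => hsum (e i))).2

lemma setIntegral_Icc_prod_eq_prod {𝕜 : Type*} [RCLike 𝕜] (a b : ι → ℝ) (f : ι → ℝ → 𝕜) :
    ∫ x in Set.Icc a b, ∏ i, f i (x i) = ∏ i, ∫ x in Set.Icc (a i) (b i), f i x := by
  rw [← integral_fintype_prod_eq_prod, ← Measure.restrict_pi_pi, Set.pi_univ_Icc, volume_pi]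

lemma integral_neg_self_eq_zero_of_odd {E : Type*} [NormedAddCommGroup E] [NormedSpace ℝ E]
    {f : ℝ → E} (hf : Function.Odd f) (a : ℝ) : ∫ x in (-a)..a, f x = 0 := by
  have : IsAddTorsionFree E := .of_isTorsionFree ℝ E
  have reflected := intervalIntegral.integral_comp_neg (a := -a) (b := a) f
  simp only [hf _, neg_neg, intervalIntegral.integral_neg] at reflected
  exact neg_eq_self.mp reflected

lemma integral_mul_exp_I_eq_integral_mul_cos_of_even {f : ℝ → ℝ} (hf : Function.Even f) {a : ℝ}
    (hfi : IntervalIntegrable f volume (-a) a) (c : ℝ) :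
    ∫ x in (-a)..a, (f x : ℂ) * Complex.exp (Complex.I * ((c * x : ℝ) : ℂ)) =
      ((∫ x in (-a)..a, f x * Real.cos (c * x) : ℝ) : ℂ) := by
  have euler (x : ℝ) : (f x : ℂ) * Complex.exp (Complex.I * ((c * x : ℝ) : ℂ)) =
      ((f x * Real.cos (c * x) : ℝ) : ℂ) + ((f x * Real.sin (c * x) : ℝ) : ℂ) * Complex.I := by
    rw [mul_comm Complex.I, Complex.exp_mul_I]
    push_cast
    ring
  have integrable_mul {g : ℝ → ℝ} (hg : Continuous g) :
      IntervalIntegrable (fun x => ((f x * g x : ℝ) : ℂ)) volume (-a) a :=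
    have hfg := hfi.mul_continuousOn hg.continuousOn
    ⟨hfg.1.ofReal, hfg.2.ofReal⟩
  have sin_part : ∫ x in (-a)..a, f x * Real.sin (c * x) = 0 :=
    integral_neg_self_eq_zero_of_odd (fun x => by simp [hf x]) a
  simp only [euler]
  rw [intervalIntegral.integral_add (integrable_mul (by fun_prop))
    ((integrable_mul (by fun_prop)).mul_const _), intervalIntegral.integral_mul_const,
    intervalIntegral.integral_ofReal, intervalIntegral.integral_ofReal, sin_part]
  simp

end General

/-- The Fourier multiplier `exp (-t σ_h(ξ))` of the heat semigroup on `hℤ`, where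
`σ_h(ξ) = 2 h⁻² (1 - cos (h ξ))` is the symbol of minus the discrete Laplacian. -/
def heatMultiplier (h t ξ : ℝ) : ℝ := Real.exp (-(2 * t / h ^ 2) * (1 - Real.cos (h * ξ)))

/-- The heat kernel of `hℤ` at time `t` between two points with difference `h n`. The exponential
`e^{i h n ξ}` of its Fourier integral is replaced by a cosine, since the multiplier is even. -/
def heatKerOne (h t : ℝ) (n : ℤ) : ℝ :=
  (2 * Real.pi)⁻¹ *
    ∫ ξ in (-(Real.pi / h))..(Real.pi / h), heatMultiplier h t ξ * Real.cos (h * n * ξ)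

section OneDimensional

variable {h t : ℝ}

@[fun_prop]
lemma continuous_heatMultiplier (h t : ℝ) : Continuous (heatMultiplier h t) := by
  unfold heatMultiplier
  fun_prop

lemma heatMultiplier_even (h t : ℝ) : Function.Even (heatMultiplier h t) := fun ξ => by
  simp [heatMultiplier]

lemma heatMultiplier_pos (h t ξ : ℝ) : 0 < heatMultiplier h t ξ := Real.exp_pos _

lemma heatMultiplier_sq (h t ξ : ℝ) : heatMultiplier h t ξ ^ 2 = heatMultiplier h (2 * t) ξ := by
  rw [heatMultiplier, heatMultiplier, ← Real.exp_nat_mul]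
  congr 1
  push_cast
  ring

lemma exp_neg_mul_sq_le_heatMultiplier (hh : h ≠ 0) (ht : 0 ≤ t) (ξ : ℝ) :
    Real.exp (-t * ξ ^ 2) ≤ heatMultiplier h t ξ := by
  refine Real.exp_le_exp.mpr ?_
  have symbol_le : 2 * t / h ^ 2 * (1 - Real.cos (h * ξ)) ≤ t * ξ ^ 2 := calc
    _ ≤ 2 * t / h ^ 2 * ((h * ξ) ^ 2 / 2) := by
      gcongr
      linarith [Real.one_sub_sq_div_two_le_cos (x := h * ξ)]
    _ = t * ξ ^ 2 := by field_simp
  linarith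

lemma heatMultiplier_le_exp_neg_mul_sq (hh : 0 < h) (ht : 0 ≤ t) {ξ : ℝ}
    (hξ : |ξ| ≤ Real.pi / h) :
    heatMultiplier h t ξ ≤ Real.exp (-(4 * t / Real.pi ^ 2) * ξ ^ 2) := by
  refine Real.exp_le_exp.mpr ?_
  have hhξ : |h * ξ| ≤ Real.pi := by
    rwa [abs_mul, abs_of_pos hh, mul_comm, ← le_div_iff₀ hh]
  have le_symbol : 4 * t / Real.pi ^ 2 * ξ ^ 2 ≤ 2 * t / h ^ 2 * (1 - Real.cos (h * ξ)) := calc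
    _ = 2 * t / h ^ 2 * (2 / Real.pi ^ 2 * (h * ξ) ^ 2) := by
      field_simp
      ring
    _ ≤ _ := by
      gcongr
      linarith [Real.cos_le_one_sub_mul_cos_sq hhξ]
  linarith

lemma heatKerOne_neg (h t : ℝ) (n : ℤ) : heatKerOne h t (-n) = heatKerOne h t n := by
  simp [heatKerOne]

lemma heatKerOne_zero (h t : ℝ) :
    heatKerOne h t 0 =
      (2 * Real.pi)⁻¹ * ∫ ξ in (-(Real.pi / h))..(Real.pi / h), heatMultiplier h t ξ := by
  simp [heatKerOne]

lemma integral_heatMultiplier_mul_exp_I (h t : ℝ) (n : ℤ) :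
    ∫ ξ in (-(Real.pi / h))..(Real.pi / h),
      (heatMultiplier h t ξ : ℂ) * Complex.exp (Complex.I * ((h * n * ξ : ℝ) : ℂ)) =
        ((2 * Real.pi * heatKerOne h t n : ℝ) : ℂ) := by
  rw [integral_mul_exp_I_eq_integral_mul_cos_of_even (heatMultiplier_even h t)
    ((continuous_heatMultiplier h t).intervalIntegrable _ _), heatKerOne,
    mul_inv_cancel_left₀ Real.two_pi_pos.ne']

lemma neg_pi_div_lt_pi_div (hh : 0 < h) : -(Real.pi / h) < Real.pi / h :=
  neg_lt_self (div_pos Real.pi_pos hh)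

lemma fourierCoeffOn_heatMultiplier (hh : 0 < h) (t : ℝ) (n : ℤ) :
    fourierCoeffOn (neg_pi_div_lt_pi_div hh) (fun ξ => (heatMultiplier h t ξ : ℂ)) n =
      ((h * heatKerOne h t n : ℝ) : ℂ) := by
  have hh' : (h : ℂ) ≠ 0 := by exact_mod_cast hh.ne'
  have hpi : (Real.pi : ℂ) ≠ 0 := by exact_mod_cast Real.pi_ne_zero
  have fourier_eq (ξ : ℝ) :
      fourier (-n) (ξ : AddCircle (Real.pi / h - -(Real.pi / h))) =
        Complex.exp (Complex.I * ((h * (-n : ℤ) * ξ : ℝ) : ℂ)) := by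
    rw [fourier_coe_apply]
    congr 1
    push_cast
    field_simp
    ring
  simp only [fourierCoeffOn_eq_integral, fourier_eq, smul_eq_mul, mul_comm (Complex.exp _)]
  rw [integral_heatMultiplier_mul_exp_I, heatKerOne_neg, Complex.real_smul, ← Complex.ofReal_mul]
  congr 1
  field_simp
  ring

lemma hasSum_mul_heatKerOne_sq (hh : 0 < h) (t : ℝ) :
    HasSum (fun n : ℤ => h * heatKerOne h t n ^ 2) (heatKerOne h (2 * t) 0) := by
  have continuous : Continuous fun ξ => (heatMultiplier h t ξ : ℂ) := by fun_prop
  have memLp : MemLp (fun ξ => (heatMultiplier h t ξ : ℂ)) 2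
      (volume.restrict (Set.Ioc (-(Real.pi / h)) (Real.pi / h))) :=
    (memLp_two_iff_integrable_sq_norm continuous.aestronglyMeasurable).mpr
      (continuous.norm.pow 2).integrableOn_Ioc
  have parseval := (hasSum_sq_fourierCoeffOn (neg_pi_div_lt_pi_div hh) memLp).mul_left h⁻¹
  simp only [fourierCoeffOn_heatMultiplier hh, Complex.norm_real, Real.norm_eq_abs, sq_abs,
    heatMultiplier_sq, smul_eq_mul] at parseval
  convert! parseval using 1
  · field_simp
  · rw [heatKerOne_zero, ← mul_assoc]
    congr 1
    field_simp
    ring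

lemma heatKerOne_zero_nonneg (hh : 0 < h) (t : ℝ) : 0 ≤ heatKerOne h t 0 := by
  rw [heatKerOne_zero]
  exact mul_nonneg (by positivity) (intervalIntegral.integral_nonneg
    (neg_pi_div_lt_pi_div hh).le fun ξ _ => (heatMultiplier_pos h t ξ).le)

lemma mul_exp_neg_le_heatKerOne_zero (hh : 0 < h) (ht : 0 ≤ t) {r : ℝ} (hr : 0 ≤ r)
    (hrh : r ≤ Real.pi / h) :
    r / Real.pi * Real.exp (-t * r ^ 2) ≤ heatKerOne h t 0 := by
  have integrable (a b : ℝ) : IntervalIntegrable (heatMultiplier h t) volume a b :=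
    (continuous_heatMultiplier h t).intervalIntegrable a b
  have integral_ge := calc
    2 * r * Real.exp (-t * r ^ 2) = ∫ _ in (-r)..r, Real.exp (-t * r ^ 2) := by
      rw [intervalIntegral.integral_const, smul_eq_mul]
      ring
    _ ≤ ∫ ξ in (-r)..r, heatMultiplier h t ξ := by
      refine intervalIntegral.integral_mono_on (by linarith) (by simp) (integrable _ _)
        fun ξ hξ => le_trans ?_ (exp_neg_mul_sq_le_heatMultiplier hh.ne' ht ξ)
      have : ξ ^ 2 ≤ r ^ 2 := sq_le_sq' hξ.1 hξ.2
      exact Real.exp_le_exp.mpr (mul_le_mul_of_nonpos_left this (by linarith))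
    _ ≤ ∫ ξ in (-(Real.pi / h))..(Real.pi / h), heatMultiplier h t ξ :=
      intervalIntegral.integral_mono_interval (by linarith) (by linarith) hrh
        (.of_forall fun ξ => (heatMultiplier_pos h t ξ).le) (integrable _ _)
  calc
    _ = (2 * Real.pi)⁻¹ * (2 * r * Real.exp (-t * r ^ 2)) := by
      field_simp
    _ ≤ heatKerOne h t 0 := by
      rw [heatKerOne_zero]
      gcongr

lemma heatKerOne_zero_le (hh : 0 < h) (ht : 0 < t) :
    heatKerOne h t 0 ≤ Real.sqrt (Real.pi / t) / 4 := by
  have integrable : Integrable fun ξ : ℝ => Real.exp (-(4 * t / Real.pi ^ 2) * ξ ^ 2) :=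
    integrable_exp_neg_mul_sq (by positivity)
  have integral_le := calc
    ∫ ξ in (-(Real.pi / h))..(Real.pi / h), heatMultiplier h t ξ
      ≤ ∫ ξ in (-(Real.pi / h))..(Real.pi / h), Real.exp (-(4 * t / Real.pi ^ 2) * ξ ^ 2) :=
      intervalIntegral.integral_mono_on (neg_pi_div_lt_pi_div hh).le
        ((continuous_heatMultiplier h t).intervalIntegrable _ _) integrable.intervalIntegrable
        fun ξ hξ => heatMultiplier_le_exp_neg_mul_sq hh ht.le (abs_le.mpr hξ)
    _ ≤ ∫ ξ : ℝ, Real.exp (-(4 * t / Real.pi ^ 2) * ξ ^ 2) := by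
      rw [intervalIntegral.integral_of_le (neg_pi_div_lt_pi_div hh).le]
      exact setIntegral_le_integral integrable (.of_forall fun ξ => (Real.exp_pos _).le)
    _ = Real.sqrt ((Real.pi / 2) ^ 2 * (Real.pi / t)) := by
      rw [integral_gaussian]
      congr 1
      field_simp
      ring
    _ = Real.pi / 2 * Real.sqrt (Real.pi / t) := by
      rw [Real.sqrt_mul (by positivity), Real.sqrt_sq (by positivity)]
  calc
    heatKerOne h t 0 ≤ (2 * Real.pi)⁻¹ * (Real.pi / 2 * Real.sqrt (Real.pi / t)) := by
      rw [heatKerOne_zero]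
      gcongr
    _ = Real.sqrt (Real.pi / t) / 4 := by
      field_simp
      ring

end OneDimensional

section HigherDimensional

variable {d : ℕ} {h t : ℝ}

lemma heatKer_eq_prod_heatKerOne (hh : 0 < h) (t : ℝ) (k m : Fin d → ℤ) :
    heatKer d h t k m = ∏ j, heatKerOne h t (k j - m j) := by
  have integrand_eq_prod (ξ : Fin d → ℝ) :
      Complex.exp (((-(2 * t / h ^ 2) * ∑ j, (1 - Real.cos (h * ξ j)) : ℝ) : ℂ)
        + Complex.I * ((∑ j, (h * (k j : ℝ) - h * (m j : ℝ)) * ξ j : ℝ) : ℂ)) =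
      ∏ j, (heatMultiplier h t (ξ j) : ℂ) *
        Complex.exp (Complex.I * ((h * (k j - m j : ℤ) * ξ j : ℝ) : ℂ)) := by
    simp only [heatMultiplier, Complex.ofReal_exp, ← Complex.exp_add, ← Complex.exp_sum,
      Finset.sum_add_distrib, ← Finset.mul_sum, ← Complex.ofReal_sum, Int.cast_sub, mul_sub h]
  simp only [heatKer, integrand_eq_prod]
  rw [setIntegral_Icc_prod_eq_prod (fun _ => -(Real.pi / h)) (fun _ => Real.pi / h)
    fun j x => (heatMultiplier h t x : ℂ) *
      Complex.exp (Complex.I * ((h * (k j - m j : ℤ) * x : ℝ) : ℂ))]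
  simp only [integral_Icc_eq_integral_Ioc,
    ← intervalIntegral.integral_of_le (neg_pi_div_lt_pi_div hh).le,
    integral_heatMultiplier_mul_exp_I]
  rw [← Complex.ofReal_prod, Complex.ofReal_re, Finset.prod_mul_distrib, Finset.prod_const,
    Finset.card_univ, Fintype.card_fin, inv_mul_cancel_left₀ (by positivity)]

lemma heatKer_self (hh : 0 < h) (t : ℝ) (y : Fin d → ℤ) :
    heatKer d h t y y = heatKerOne h t 0 ^ d := by
  simp [heatKer_eq_prod_heatKerOne hh]

lemma hasSum_mul_heatKer_sq (hh : 0 < h) (t : ℝ) (y : Fin d → ℤ) :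
    HasSum (fun x : Fin d → ℤ => h ^ d * heatKer d h t x y ^ 2) (heatKer d h (2 * t) y y) := by
  have shifted (j : Fin d) :
      HasSum (fun n : ℤ => h * heatKerOne h t (n - y j) ^ 2) (heatKerOne h (2 * t) 0) :=
    (Equiv.subRight (y j)).hasSum_iff.mpr (hasSum_mul_heatKerOne_sq hh t)
  have prod := hasSum_prod_apply (fun j => (shifted j).summable.norm) shifted
  simpa [heatKer_eq_prod_heatKerOne hh, Finset.prod_mul_distrib, Finset.prod_pow] using prod

lemma pow_le_heatKer_self {h₀ : ℝ} (hh : 0 < h) (hhh₀ : h ≤ h₀) (ht : 0 ≤ t) (y : Fin d → ℤ) :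
    (h₀⁻¹ * Real.exp (-t * (Real.pi / h₀) ^ 2)) ^ d ≤ heatKer d h t y y := by
  have hh₀ : 0 < h₀ := hh.trans_le hhh₀
  rw [heatKer_self hh]
  gcongr
  simpa [div_div_cancel_left' Real.pi_ne_zero] using
    mul_exp_neg_le_heatKerOne_zero hh ht (div_pos Real.pi_pos hh₀).le
      (div_le_div_of_nonneg_left Real.pi_pos.le hh hhh₀)

lemma heatKer_self_le_pow (hh : 0 < h) (ht : 0 < t) (y : Fin d → ℤ) :
    heatKer d h t y y ≤ (Real.sqrt (Real.pi / t) / 4) ^ d := by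
  rw [heatKer_self hh]
  exact pow_le_pow_left₀ (heatKerOne_zero_nonneg hh t) (heatKerOne_zero_le hh ht) d

end HigherDimensional

theorem stmt_13_general (d : ℕ) {Tm : ℝ} (hTm : 0 < Tm) (Tp : ℝ) {h₀ : ℝ} (hh₀ : 0 < h₀) :
    ∃ κ > (0 : ℝ), ∀ t : ℝ, Tm ≤ t → t ≤ Tp → ∀ h : ℝ, 0 < h → h ≤ h₀ → ∀ y : Fin d → ℤ,
      κ⁻¹ ≤ Real.sqrt (∑' x : Fin d → ℤ, h ^ d * heatKer d h t x y ^ 2) ∧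
      Real.sqrt (∑' x : Fin d → ℤ, h ^ d * heatKer d h t x y ^ 2) ≤ κ := by
  let lower := (h₀⁻¹ * Real.exp (-(2 * Tp) * (Real.pi / h₀) ^ 2)) ^ d
  let upper := (Real.sqrt (Real.pi / (2 * Tm)) / 4) ^ d
  have lower_pos : 0 < lower := by positivity
  refine ⟨max (Real.sqrt lower)⁻¹ (Real.sqrt upper), by positivity,
    fun t hTmt htTp h hh hhh₀ y => ?_⟩
  rw [(hasSum_mul_heatKer_sq hh t y).tsum_eq]
  have lower_le : lower ≤ heatKer d h (2 * t) y y :=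
    le_trans (by dsimp only [lower]; gcongr) (pow_le_heatKer_self hh hhh₀ (by linarith) y)
  have le_upper : heatKer d h (2 * t) y y ≤ upper :=
    (heatKer_self_le_pow hh (by linarith) y).trans (by dsimp only [upper]; gcongr)
  have lower_sqrt_pos : 0 < Real.sqrt lower := Real.sqrt_pos.mpr lower_pos
  exact ⟨(inv_le_of_inv_le₀ lower_sqrt_pos (le_max_left _ _)).trans (Real.sqrt_le_sqrt lower_le),
    (Real.sqrt_le_sqrt le_upper).trans (le_max_right _ _)⟩

/-- Two-sided `ℓ²` bound for the discrete heat kernel, uniformly for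
`T_− ≤ t ≤ T_+` and small mesh size. -/
theorem stmt_13 (d : ℕ) (Tm Tp : ℝ) (hTm : 0 < Tm) (hTT : Tm < Tp) :
    ∃ h₀ > (0:ℝ), ∃ κ > (0:ℝ),
      ∀ t : ℝ, Tm ≤ t → t ≤ Tp → ∀ h : ℝ, 0 < h → h < h₀ → ∀ y : Fin d → ℤ,
        κ⁻¹ ≤ Real.sqrt (∑' x : Fin d → ℤ, h ^ d * heatKer d h t x y ^ 2) ∧
        Real.sqrt (∑' x : Fin d → ℤ, h ^ d * heatKer d h t x y ^ 2) ≤ κ := by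
  obtain ⟨κ, hκ, bounds⟩ := stmt_13_general d hTm Tp one_pos
  exact ⟨1, one_pos, κ, hκ, fun t hTmt htTp h hh hh1 => bounds t hTmt htTp h hh hh1.le⟩
end
end

section
/- For every s>0, (1/2)·ln(1+s) ≤ ln(s+√(s²+1)) − s/(1+√(s²+1)) ≤ ln(1+s); that is, the function ζ(s) = arcsinh(s) + (1−√(s²+1))/s satisfies (1/2)ln(1+s) ≤ ζ(s) ≤ ln(1+s) on (0,∞). -/
/-!
The derivative of `ζ(s) = arsinh s - s / (1 + √(1 + s²))` collapses to `1 / (1 + √(1 + s²))`.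
For `s ≥ 0` we have `s ≤ √(1 + s²) ≤ 1 + 2 s`, so this derivative lies between those of
`(1/2) ln (1 + s)` and `ln (1 + s)`, and all three functions vanish at `0`.
-/

open Set

/-- The function `ζ(s) = arsinh s + (1 - √(1 + s²)) / s`, with the quotient rationalized so that
the formula is also meaningful, and `ζ` differentiable, at `s = 0`. -/
noncomputable def zeta (s : ℝ) : ℝ :=
  Real.arsinh s - s / (1 + √(1 + s ^ 2))

@[simp]
theorem zeta_zero : zeta 0 = 0 := by
  simp [zeta]

theorem zeta_eq_log_sub (s : ℝ) :
    zeta s = Real.log (s + √(s ^ 2 + 1)) - s / (1 + √(s ^ 2 + 1)) := by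
  rw [zeta, Real.arsinh, add_comm 1 (s ^ 2)]

theorem zeta_eq_arsinh_add {s : ℝ} (hs : s ≠ 0) :
    zeta s = Real.arsinh s + (1 - √(s ^ 2 + 1)) / s := by
  have sq_sqrt : √(s ^ 2 + 1) ^ 2 = s ^ 2 + 1 := Real.sq_sqrt (by positivity)
  have rationalize : (1 - √(s ^ 2 + 1)) / s = -s / (1 + √(s ^ 2 + 1)) := by
    rw [div_eq_div_iff hs (by positivity)]
    linear_combination -sq_sqrt
  rw [zeta, rationalize, add_comm 1 (s ^ 2), neg_div, sub_eq_add_neg]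

theorem hasDerivAt_sqrt_one_add_sq (s : ℝ) :
    HasDerivAt (fun x : ℝ => √(1 + x ^ 2)) (s / √(1 + s ^ 2)) s := by
  have inner : HasDerivAt (fun x : ℝ => 1 + x ^ 2) (2 * s) s := by
    simpa using (hasDerivAt_pow 2 s).const_add 1
  exact (inner.sqrt (by positivity)).congr_deriv (mul_div_mul_left _ _ two_ne_zero)

theorem hasDerivAt_div_one_add_sqrt_one_add_sq (s : ℝ) :
    HasDerivAt (fun x : ℝ => x / (1 + √(1 + x ^ 2)))
      (1 / (√(1 + s ^ 2) * (1 + √(1 + s ^ 2)))) s := by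
  have sq_sqrt : √(1 + s ^ 2) ^ 2 = 1 + s ^ 2 := Real.sq_sqrt (by positivity)
  have : 0 < √(1 + s ^ 2) := by positivity
  refine ((hasDerivAt_id s).div ((hasDerivAt_sqrt_one_add_sq s).const_add 1)
    (by positivity)).congr_deriv ?_
  simp only [id_eq]
  field_simp
  linear_combination sq_sqrt

theorem hasDerivAt_zeta (s : ℝ) : HasDerivAt zeta (1 / (1 + √(1 + s ^ 2))) s := by
  have : 0 < √(1 + s ^ 2) := by positivity
  refine ((Real.hasDerivAt_arsinh s).sub
    (hasDerivAt_div_one_add_sqrt_one_add_sq s)).congr_deriv ?_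
  field_simp
  ring

theorem continuous_zeta : Continuous zeta :=
  continuous_iff_continuousAt.2 fun s => (hasDerivAt_zeta s).continuousAt

theorem hasDerivAt_log_one_add {s : ℝ} (hs : -1 < s) :
    HasDerivAt (fun x : ℝ => Real.log (1 + x)) (1 / (1 + s)) s :=
  ((hasDerivAt_id s).const_add 1).log (by simp only [id_eq]; linarith)

theorem continuousOn_log_one_add_Icc_zero (s : ℝ) :
    ContinuousOn (fun x : ℝ => Real.log (1 + x)) (Icc 0 s) := fun _ hx =>
  (hasDerivAt_log_one_add (neg_one_lt_zero.trans_le hx.1)).continuousAt.continuousWithinAt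

theorem half_log_one_add_le_zeta {s : ℝ} (hs : 0 ≤ s) :
    1 / 2 * Real.log (1 + s) ≤ zeta s := by
  refine image_le_of_deriv_right_le_deriv_boundary
    ((continuousOn_log_one_add_Icc_zero s).const_mul (1 / 2))
    (fun x hx => ((hasDerivAt_log_one_add (by linarith [hx.1])).const_mul _).hasDerivWithinAt)
    (by simp) continuous_zeta.continuousOn
    (fun x _ => (hasDerivAt_zeta x).hasDerivWithinAt) (fun x hx => ?_) (right_mem_Icc.2 hs)
  have sqrt_le : √(1 + x ^ 2) ≤ 1 + 2 * x :=
    Real.sqrt_le_iff.2 ⟨by linarith [hx.1], by nlinarith [hx.1]⟩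
  rw [one_div_mul_one_div]
  exact one_div_le_one_div_of_le (by positivity) (by linarith)

theorem zeta_le_log_one_add {s : ℝ} (hs : 0 ≤ s) : zeta s ≤ Real.log (1 + s) := by
  refine image_le_of_deriv_right_le_deriv_boundary continuous_zeta.continuousOn
    (fun x _ => (hasDerivAt_zeta x).hasDerivWithinAt) (by simp)
    (continuousOn_log_one_add_Icc_zero s)
    (fun x hx => (hasDerivAt_log_one_add (by linarith [hx.1])).hasDerivWithinAt)
    (fun x hx => ?_) (right_mem_Icc.2 hs)
  have le_sqrt : x ≤ √(1 + x ^ 2) := Real.le_sqrt_of_sq_le (by linarith)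
  exact one_div_le_one_div_of_le (by linarith [hx.1]) (by linarith)

/-- For `s>0`, `(1/2)ln(1+s) ≤ ln(s+√(s²+1)) − s/(1+√(s²+1)) ≤ ln(1+s)`; that is,
`ζ(s) = arcsinh(s) + (1−√(s²+1))/s` satisfies `(1/2)ln(1+s) ≤ ζ(s) ≤ ln(1+s)`. -/
theorem stmt_15 (s : ℝ) (hs : 0 < s) :
    (1 / 2) * Real.log (1 + s)
        ≤ Real.log (s + Real.sqrt (s ^ 2 + 1)) - s / (1 + Real.sqrt (s ^ 2 + 1)) ∧
    Real.log (s + Real.sqrt (s ^ 2 + 1)) - s / (1 + Real.sqrt (s ^ 2 + 1))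
        ≤ Real.log (1 + s) ∧
    Real.arsinh s + (1 - Real.sqrt (s ^ 2 + 1)) / s
        = Real.log (s + Real.sqrt (s ^ 2 + 1)) - s / (1 + Real.sqrt (s ^ 2 + 1)) := by
  rw [← zeta_eq_log_sub]
  exact ⟨half_log_one_add_le_zeta hs.le, zeta_le_log_one_add hs.le,
    (zeta_eq_arsinh_add hs.ne').symm⟩
end

section
/- (Pointwise Gaussian-type upper bound for the discrete heat kernel.) There exists a constant C>0 depending only on d such that for all h>0, all t>0 and all x,y ∈ ℤ^d, p_{d,h}(t,hx,hy) ≤ C·t^{−d/2}·exp(−Σ_{j=1}^d (1/2)·|x_j−y_j|·ln(1 + h²|x_j−y_j|/(2t))). -/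
open scoped BigOperators
open MeasureTheory

noncomputable section

/-!
The integrand of the `d`-dimensional kernel is a product over the coordinates, so everything
reduces to `p1ker τ u` with `τ = t / h²`. Its integrand is entire and `2π`-periodic, so the contour
can be moved to `Im z = a`, where the modulus of the integrand is
`exp (2τ(cosh a - 1) - ua) * exp (-2τ cosh a (1 - cos x))`. On `[-π, π]` the second factor is at
most the Gaussian `exp (-(4τ/π²) x²)`, which gives the decay `τ^{-1/2}`; the first factor is
controlled by taking `a = ± log (1 + |u|/(2τ))`.
-/

section ContourShift

open Complex
open scoped Interval

theorem intervalIntegral_add_mul_I_eq_of_periodic {E : Type*} [NormedAddCommGroup E]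
    [NormedSpace ℂ E] {f : ℂ → E} {c T b : ℝ}
    (hf : DifferentiableOn ℂ f ([[c, c + T]] ×ℂ [[0, b]])) (hper : Function.Periodic f T) :
    ∫ x in c..c + T, f (x + b * I) = ∫ x in c..c + T, f x := by
  have boundary := integral_boundary_rect_eq_zero_of_differentiableOn f ⟨c, 0⟩ ⟨c + T, b⟩ hf
  have sides_agree (y : ℝ) : f ((c + T : ℝ) + y * I) = f (c + y * I) := by
    rw [← hper (c + y * I)]
    push_cast
    ring_nf
  simp only [sides_agree, ofReal_zero, zero_mul, add_zero, add_sub_cancel_right] at boundary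
  exact (sub_eq_zero.mp boundary).symm

end ContourShift

section OneDimensional

open Complex (I)
open scoped Real ComplexConjugate

/-- The integrand of `p1ker`, extended to an entire function so that the contour of integration
can be moved. -/
def p1Integrand (τ : ℝ) (u : ℤ) (z : ℂ) : ℂ :=
  Complex.exp (-(2 * τ) * (1 - Complex.cos z) + I * u * z)

theorem differentiable_p1Integrand (τ : ℝ) (u : ℤ) : Differentiable ℂ (p1Integrand τ u) := by
  unfold p1Integrand
  fun_prop

theorem periodic_p1Integrand (τ : ℝ) (u : ℤ) :
    Function.Periodic (p1Integrand τ u) ((2 * π : ℝ) : ℂ) := by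
  intro z
  push_cast
  rw [p1Integrand, p1Integrand, Complex.cos_add_two_pi, Complex.exp_eq_exp_iff_exists_int]
  exact ⟨u, by ring⟩

theorem conj_p1Integrand (τ : ℝ) (u : ℤ) (z : ℂ) :
    conj (p1Integrand τ u z) = p1Integrand τ u (-conj z) := by
  simp [p1Integrand, ← Complex.exp_conj, ← Complex.cos_conj, Complex.conj_ofNat]

theorem norm_p1Integrand_add_mul_I (τ : ℝ) (u : ℤ) (x a : ℝ) :
    ‖p1Integrand τ u (x + a * I)‖ =
      Real.exp (-(2 * τ) * (1 - Real.cos x * Real.cosh a) - u * a) := by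
  rw [p1Integrand, Complex.norm_exp, Complex.cos_add_mul_I, ← Complex.ofReal_cos,
    ← Complex.ofReal_sin, ← Complex.ofReal_cosh, ← Complex.ofReal_sinh]
  congr 1
  simp only [Complex.add_re, Complex.mul_re, Complex.mul_im, Complex.sub_re, Complex.sub_im,
    Complex.neg_re, Complex.neg_im, Complex.one_re, Complex.one_im, Complex.re_ofNat,
    Complex.im_ofNat, Complex.I_re, Complex.I_im, Complex.ofReal_re, Complex.ofReal_im,
    Complex.intCast_re, Complex.intCast_im, Complex.add_im]
  ring

theorem norm_p1Integrand_add_mul_I_le {τ : ℝ} (hτ : 0 ≤ τ) (u : ℤ) {x : ℝ} (hx : |x| ≤ π)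
    (a : ℝ) :
    ‖p1Integrand τ u (x + a * I)‖ ≤
      Real.exp (2 * τ * (Real.cosh a - 1) - u * a) * Real.exp (-(4 * τ / π ^ 2) * x ^ 2) := by
  rw [norm_p1Integrand_add_mul_I, ← Real.exp_add, Real.exp_le_exp]
  have quadratic_le : 2 / π ^ 2 * x ^ 2 ≤ (1 - Real.cos x) * Real.cosh a :=
    calc 2 / π ^ 2 * x ^ 2 ≤ 1 - Real.cos x := by linarith [Real.cos_le_one_sub_mul_cos_sq hx]
      _ ≤ (1 - Real.cos x) * Real.cosh a :=
        le_mul_of_one_le_right (sub_nonneg.mpr (Real.cos_le_one x)) (Real.one_le_cosh a)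
  calc -(2 * τ) * (1 - Real.cos x * Real.cosh a) - u * a
      = 2 * τ * (Real.cosh a - 1) - u * a - 2 * τ * ((1 - Real.cos x) * Real.cosh a) := by ring
    _ ≤ 2 * τ * (Real.cosh a - 1) - u * a - 2 * τ * (2 / π ^ 2 * x ^ 2) := by gcongr
    _ = 2 * τ * (Real.cosh a - 1) - u * a + -(4 * τ / π ^ 2) * x ^ 2 := by ring

theorem intervalIntegral_exp_neg_mul_sq_le {b : ℝ} (hb : 0 < b) {c d : ℝ} (hcd : c ≤ d) :
    ∫ x in c..d, Real.exp (-b * x ^ 2) ≤ √(π / b) := by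
  rw [intervalIntegral.integral_of_le hcd, ← integral_gaussian]
  exact setIntegral_le_integral (integrable_exp_neg_mul_sq hb) (.of_forall fun x => by positivity)

theorem integral_p1Integrand (τ : ℝ) (u : ℤ) :
    ∫ η in -π..π, p1Integrand τ u η = ((2 * π * p1ker τ u : ℝ) : ℂ) := by
  have integral_real :
      conj (∫ η in -π..π, p1Integrand τ u η) = ∫ η in -π..π, p1Integrand τ u η := by
    rw [← intervalIntegral.intervalIntegral_conj]
    simpa [conj_p1Integrand] using
      intervalIntegral.integral_comp_neg (a := -π) (b := π) fun η : ℝ => p1Integrand τ u η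
  have p1ker_eq : 2 * π * p1ker τ u = (∫ η in -π..π, p1Integrand τ u η).re := by
    simp only [p1ker, p1Integrand]
    push_cast
    field_simp
  rw [p1ker_eq, Complex.conj_eq_iff_re.mp integral_real]

theorem abs_p1ker_le_exp_cosh {τ : ℝ} (hτ : 0 < τ) (u : ℤ) (a : ℝ) :
    |p1ker τ u| ≤ √(π / τ) / 4 * Real.exp (2 * τ * (Real.cosh a - 1) - u * a) := by
  have shift : ∫ x in -π..π, p1Integrand τ u (x + a * I) = ∫ x in -π..π, p1Integrand τ u x := by
    simpa [two_mul] using intervalIntegral_add_mul_I_eq_of_periodic (c := -π) (b := a)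
      (differentiable_p1Integrand τ u).differentiableOn (periodic_p1Integrand τ u)
  have sqrt_eq : √(π / (4 * τ / π ^ 2)) = π / 2 * √(π / τ) := by
    rw [show π / (4 * τ / π ^ 2) = (π / 2) ^ 2 * (π / τ) by field_simp; norm_num,
      Real.sqrt_mul (by positivity), Real.sqrt_sq (by positivity)]
  have integral_le : 2 * π * |p1ker τ u| ≤
      Real.exp (2 * τ * (Real.cosh a - 1) - u * a) * (π / 2 * √(π / τ)) :=
    calc 2 * π * |p1ker τ u| = ‖∫ x in -π..π, p1Integrand τ u (x + a * I)‖ := by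
          rw [shift, integral_p1Integrand, Complex.norm_real, Real.norm_eq_abs, abs_mul,
            abs_of_pos Real.two_pi_pos]
      _ ≤ ∫ x in -π..π, Real.exp (2 * τ * (Real.cosh a - 1) - u * a) *
            Real.exp (-(4 * τ / π ^ 2) * x ^ 2) := by
          refine intervalIntegral.norm_integral_le_of_norm_le (by linarith [Real.pi_pos])
            (.of_forall fun x hx => ?_) (Continuous.intervalIntegrable (by fun_prop) _ _)
          exact norm_p1Integrand_add_mul_I_le hτ.le u (abs_le.mpr ⟨hx.1.le, hx.2⟩) a
      _ ≤ Real.exp (2 * τ * (Real.cosh a - 1) - u * a) * (π / 2 * √(π / τ)) := by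
          rw [intervalIntegral.integral_const_mul, ← sqrt_eq]
          gcongr
          exact intervalIntegral_exp_neg_mul_sq_le (by positivity) (by linarith [Real.pi_pos])
  rw [← mul_le_mul_iff_right₀ Real.two_pi_pos]
  linarith

theorem cosh_log_one_add_sub_one_le {s : ℝ} (hs : 0 ≤ s) :
    Real.cosh (Real.log (1 + s)) - 1 ≤ s / 2 * Real.log (1 + s) :=
  have one_add_pos : 0 < 1 + s := by positivity
  calc Real.cosh (Real.log (1 + s)) - 1 = s / 2 * (1 - (1 + s)⁻¹) := by
        rw [Real.cosh_log one_add_pos]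
        field_simp
        ring
    _ ≤ s / 2 * Real.log (1 + s) := by
        gcongr
        exact Real.one_sub_inv_le_log_of_pos one_add_pos

theorem abs_p1ker_le {τ : ℝ} (hτ : 0 < τ) (u : ℤ) :
    |p1ker τ u| ≤
      √(π / τ) / 4 * Real.exp (-(1 / 2 * |(u : ℝ)| * Real.log (1 + |(u : ℝ)| / (2 * τ)))) := by
  set s := |(u : ℝ)| / (2 * τ) with hs
  have abs_eq : |(u : ℝ)| = 2 * τ * s := by rw [hs]; field_simp
  obtain ⟨a, cosh_a, u_mul_a⟩ : ∃ a, Real.cosh a = Real.cosh (Real.log (1 + s)) ∧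
      u * a = |(u : ℝ)| * Real.log (1 + s) := by
    rcases abs_choice (u : ℝ) with h | h
    · exact ⟨Real.log (1 + s), rfl, by rw [h]⟩
    · exact ⟨-Real.log (1 + s), Real.cosh_neg _, by rw [h, neg_mul, mul_neg]⟩
  refine (abs_p1ker_le_exp_cosh hτ u a).trans ?_
  gcongr
  calc 2 * τ * (Real.cosh a - 1) - u * a
      ≤ 2 * τ * (s / 2 * Real.log (1 + s)) - |(u : ℝ)| * Real.log (1 + s) := by
        rw [cosh_a, u_mul_a]
        gcongr
        exact cosh_log_one_add_sub_one_le (by positivity)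
    _ = -(1 / 2 * |(u : ℝ)| * Real.log (1 + s)) := by rw [abs_eq]; ring

end OneDimensional

section Factorization

open Complex (I)
open scoped Real

theorem integral_p1Integrand_comp_mul_left {h : ℝ} (hh : 0 < h) (τ : ℝ) (u : ℤ) :
    ∫ ξ in Set.Icc (-(π / h)) (π / h), p1Integrand τ u (h * ξ : ℝ) =
      ((2 * π * (h⁻¹ * p1ker τ u) : ℝ) : ℂ) := by
  have neg_le : -(π / h) ≤ π / h := neg_le_self (by positivity)
  rw [integral_Icc_eq_integral_Ioc, ← intervalIntegral.integral_of_le neg_le,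
    intervalIntegral.integral_comp_mul_left (fun η : ℝ => p1Integrand τ u η) hh.ne', mul_neg,
    mul_div_cancel₀ π hh.ne', integral_p1Integrand, Complex.real_smul]
  push_cast
  ring

theorem heatKer_eq_prod_p1ker (d : ℕ) {h : ℝ} (hh : 0 < h) (t : ℝ) (x y : Fin d → ℤ) :
    heatKer d h t x y = ∏ j, h⁻¹ * p1ker (t / h ^ 2) (x j - y j) := by
  have integrand_eq_prod (ξ : Fin d → ℝ) :
      Complex.exp (((-(2 * t / h ^ 2) * ∑ j, (1 - Real.cos (h * ξ j)) : ℝ) : ℂ)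
        + I * ((∑ j, (h * (x j : ℝ) - h * (y j : ℝ)) * ξ j : ℝ) : ℂ)) =
      ∏ j, p1Integrand (t / h ^ 2) (x j - y j) (h * ξ j : ℝ) := by
    simp only [p1Integrand]
    rw [← Complex.exp_sum]
    congr 1
    push_cast
    rw [Finset.mul_sum, Finset.mul_sum, ← Finset.sum_add_distrib]
    refine Finset.sum_congr rfl fun j _ => ?_
    ring
  simp only [heatKer, integrand_eq_prod]
  rw [← Set.pi_univ_Icc, volume_pi, Measure.restrict_pi_pi,
    integral_fintype_prod_eq_prod fun j (ξ : ℝ) =>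
      p1Integrand (t / h ^ 2) (x j - y j) (h * ξ : ℝ)]
  simp only [integral_p1Integrand_comp_mul_left hh]
  rw [← Complex.ofReal_prod, Complex.ofReal_re, Finset.prod_mul_distrib, Finset.prod_const,
    Finset.card_univ, Fintype.card_fin, inv_mul_cancel_left₀ (by positivity)]

theorem abs_inv_mul_p1ker_le {h t : ℝ} (hh : 0 < h) (ht : 0 < t) (u : ℤ) :
    |h⁻¹ * p1ker (t / h ^ 2) u| ≤ √(π / t) / 4 *
      Real.exp (-(1 / 2 * |(u : ℝ)| * Real.log (1 + h ^ 2 * |(u : ℝ)| / (2 * t)))) := by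
  have sqrt_eq : √(π / (t / h ^ 2)) = h * √(π / t) := by
    rw [show π / (t / h ^ 2) = h ^ 2 * (π / t) by field_simp, Real.sqrt_mul (sq_nonneg h),
      Real.sqrt_sq hh.le]
  have bound := abs_p1ker_le (div_pos ht (pow_pos hh 2)) u
  rw [sqrt_eq, show |(u : ℝ)| / (2 * (t / h ^ 2)) = h ^ 2 * |(u : ℝ)| / (2 * t) by field_simp]
    at bound
  rw [abs_mul, abs_of_pos (inv_pos.mpr hh), inv_mul_le_iff₀ hh]
  linarith

theorem sqrt_div_pow_eq_mul_rpow {t : ℝ} (ht : 0 < t) (c : ℝ) (d : ℕ) :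
    √(c / t) ^ d = √c ^ d * t ^ (-(d : ℝ) / 2) := by
  rw [Real.sqrt_div' c ht.le, div_pow, neg_div, Real.rpow_neg ht.le,
    Real.rpow_div_two_eq_sqrt _ ht.le, Real.rpow_natCast, div_eq_mul_inv]

end Factorization

/-- Pointwise Gaussian-type upper bound for the discrete heat kernel. -/
theorem stmt_16 (d : ℕ) :
    ∃ C > (0:ℝ), ∀ h t : ℝ, 0 < h → 0 < t → ∀ x y : Fin d → ℤ,
      heatKer d h t x y ≤ C * t ^ (-(d : ℝ) / 2) *
        Real.exp (-∑ j : Fin d, (1 / 2) * |((x j - y j : ℤ) : ℝ)| *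
          Real.log (1 + h ^ 2 * |((x j - y j : ℤ) : ℝ)| / (2 * t))) := by
  refine ⟨√Real.pi ^ d / 4 ^ d, by positivity, fun h t hh ht x y => ?_⟩
  calc heatKer d h t x y ≤ |heatKer d h t x y| := le_abs_self _
    _ = ∏ j, |h⁻¹ * p1ker (t / h ^ 2) (x j - y j)| := by
      rw [heatKer_eq_prod_p1ker d hh, Finset.abs_prod]
    _ ≤ ∏ j, √(Real.pi / t) / 4 * Real.exp (-(1 / 2 * |((x j - y j : ℤ) : ℝ)| *
          Real.log (1 + h ^ 2 * |((x j - y j : ℤ) : ℝ)| / (2 * t)))) :=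
      Finset.prod_le_prod (fun _ _ => abs_nonneg _) fun j _ => abs_inv_mul_p1ker_le hh ht _
    _ = _ := by
      rw [Finset.prod_mul_distrib, ← Real.exp_sum, Finset.sum_neg_distrib, Finset.prod_const,
        Finset.card_univ, Fintype.card_fin, div_pow, sqrt_div_pow_eq_mul_rpow ht]
      ring
end
end

section
/- (Thickness is necessary for uniform observability.) Let ω ⊂ ℝ^d be open and assume the sampling property: for every Λ>0 and every x₀ ∈ ℝ^d, h^d·card(ω∩hℤ^d∩Q_Λ(x₀)) → vol(ω∩Q_Λ(x₀)) as h→0⁺ (this holds whenever ω has smooth boundary). Let V ∈ C_b(ℝ^d;ℝ). Assume there exist T>0, h₀>0 and C>0 such that for every 0<h≤h₀ and every u₀ ∈ ℓ²(hℤ^d), the solution u(t) = e^{−tP_h}u₀ satisfies ‖u(T)‖²_{ℓ²(hℤ^d)} ≤ C·∫₀^T ‖u(t)‖²_{ℓ²(ω)} dt + C·e^{−C/h²}·‖u₀‖²_{ℓ²(hℤ^d)}. Then ω is thick: there exist L>0 and γ ∈ (0,1] such that for every x ∈ ℝ^d, vol(ω∩(x+Q_L(0))) ≥ γ·vol(Q_L(0)).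 -/
open scoped BigOperators
open MeasureTheory

noncomputable section

open scoped ENNReal

/-- An open set `ω ⊂ ℝ^d` is `(L,γ)`-equidistributed if each cube `Lk+[−L/2,L/2]^d`
contains a cube `z_k+[−γL/2,γL/2]^d` included in `ω`. -/
def Equidistributed (d : ℕ) (L γ : ℝ) (ω : Set (Fin d → ℝ)) : Prop :=
  0 < L ∧ 0 < γ ∧ γ ≤ 1 ∧
    ∃ z : (Fin d → ℤ) → Fin d → ℝ, ∀ k : Fin d → ℤ,
      {x : Fin d → ℝ | ∀ i, |x i - z k i| ≤ γ * L / 2}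
        ⊆ ω ∩ {x : Fin d → ℝ | ∀ i, |x i - L * (k i : ℝ)| ≤ L / 2}

instance : Fact ((1:ℝ≥0∞) ≤ 2) := ⟨one_le_two⟩

/-- The Hilbert space `ℓ²(hℤ^d)` (indexed by `ℤ^d`). -/
abbrev Hsp (d : ℕ) : Type := lp (fun _ : (Fin d → ℤ) => ℂ) 2

/-- `P` realizes the discrete Schrödinger operator `P_h = −Δ_h + V` on `ℓ²(hℤ^d)`. -/
def RealizesPh (d : ℕ) (h : ℝ) (V : (Fin d → ℝ) → ℝ) (P : Hsp d →L[ℂ] Hsp d) : Prop :=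
  ∀ (w : Hsp d) (k : Fin d → ℤ),
    (P w : ∀ _ : (Fin d → ℤ), ℂ) k
      = -discLap d h (w : ∀ _ : (Fin d → ℤ), ℂ) k
        + (V (pt d h k) : ℂ) * (w : ∀ _ : (Fin d → ℤ), ℂ) k

/-- `‖V‖_{L^∞} = sup |V|`. -/
def supNorm (d : ℕ) (V : (Fin d → ℝ) → ℝ) : ℝ := ⨆ x, |V x|

/-- The squared `ℓ²(E∩hℤ^d)` norm of an element of `ℓ²(hℤ^d)`. -/
def sqNormOn (d : ℕ) (h : ℝ) (E : Set (Fin d → ℝ)) (w : Hsp d) : ℝ :=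
  ∑' k : Fin d → ℤ,
    Set.indicator E (fun _ => ‖(w : ∀ _ : (Fin d → ℤ), ℂ) k‖ ^ 2) (pt d h k)

/-- The cube `Q_Λ(x₀) = x₀+[−Λ/2,Λ/2]^d`. -/
def Qcube (d : ℕ) (Λ : ℝ) (x₀ : Fin d → ℝ) : Set (Fin d → ℝ) :=
  {x : Fin d → ℝ | ∀ i, |x i - x₀ i| ≤ Λ / 2}

/-!
Fix `x` and test observability on the product `φ` of the functions `1 / cosh (y_i - x_i)`. The
second differences of `1 / cosh` at mesh `h ≤ 1` are at most `2 h² / cosh`, so `|P_h φ| ≤ K φ` with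
`K = 2 d + sup |V|` independent of `h`. For large `c` the operator `c - P_h` preserves positivity,
so this differential inequality integrates to `e^{-tK} φ ≤ e^{-tP_h} φ ≤ e^{tK} φ` pointwise.
Multiplied by `h ^ d`, the observability inequality then bounds a positive constant by a multiple of
the lattice mass of `φ²` in `ω`, plus an error tending to `0`. Splitting `ω` at the cube of side `L`
around `x` and letting `h → 0`, the part inside contributes at most `vol (ω ∩ Q_L(x))`, while the
part outside carries a factor `1 / cosh (L / 2)`, absorbed by choosing `L` large. All constants are
independent of `x`.
-/

open Filter Topology

section InfiniteSums

lemma hasSum_int_sub_of_le_succ {g : ℤ → ℝ} {a b : ℝ} (hg : ∀ k, g k ≤ g (k + 1))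
    (ha : Tendsto g atBot (𝓝 a)) (hb : Tendsto g atTop (𝓝 b)) :
    HasSum (fun k => g (k + 1) - g k) (b - a) := by
  have right : HasSum (fun n : ℕ => g ((n : ℤ) + 1) - g (n : ℤ)) (b - g 0) := by
    rw [hasSum_iff_tendsto_nat_of_nonneg fun n => sub_nonneg.2 (hg n)]
    have telescope (n : ℕ) :
        ∑ i ∈ Finset.range n, (g ((i : ℤ) + 1) - g (i : ℤ)) = g (n : ℤ) - g 0 :=
      mod_cast Finset.sum_range_sub (fun i : ℕ => g i) n
    simpa only [telescope, Function.comp_def] using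
      (hb.comp tendsto_natCast_atTop_atTop).sub_const (g 0)
  have left : HasSum (fun n : ℕ => g (-((n : ℤ) + 1) + 1) - g (-((n : ℤ) + 1))) (g 0 - a) := by
    rw [hasSum_iff_tendsto_nat_of_nonneg fun n => sub_nonneg.2 (hg _)]
    have telescope (n : ℕ) :
        ∑ i ∈ Finset.range n, (g (-((i : ℤ) + 1) + 1) - g (-((i : ℤ) + 1))) = g 0 - g (-n) := by
      simpa using Finset.sum_range_sub' (fun i : ℕ => g (-i)) n
    simpa only [telescope, Function.comp_def] using
      (ha.comp (tendsto_neg_atTop_atBot.comp tendsto_natCast_atTop_atTop)).const_sub (g 0)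
  simpa only [sub_add_sub_cancel] using
    HasSum.of_nat_of_neg_add_one (f := fun k : ℤ => g (k + 1) - g k) right left

lemma hasSum_prod_fin_apply {β : Type*} {d : ℕ} {f : Fin d → β → ℝ} {s : Fin d → ℝ}
    (hf : ∀ i b, 0 ≤ f i b) (hs : ∀ i, HasSum (f i) (s i)) :
    HasSum (fun k : Fin d → β => ∏ i, f i (k i)) (∏ i, s i) := by
  induction d with
  | zero => simp
  | succ d ih =>
    have tail := ih (fun i => hf i.succ) fun i => hs i.succ
    have tail_nonneg (k : Fin d → β) : 0 ≤ ∏ i, f i.succ (k i) :=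
      Finset.prod_nonneg fun i _ => hf _ _
    have summable_mul := (hs 0).summable.mul_of_nonneg tail.summable (hf 0) tail_nonneg
    rw [← (Fin.consEquiv fun _ => β).hasSum_iff, Fin.prod_univ_succ]
    simpa [Function.comp_def, Fin.prod_univ_succ] using (hs 0).mul tail summable_mul

end InfiniteSums

section HyperbolicFunctions

lemma tendsto_tanh_atTop : Tendsto Real.tanh atTop (𝓝 1) := by
  have tanh_eq (x : ℝ) : Real.tanh x = 1 - 2 / (Real.exp (2 * x) + 1) := by
    rw [Real.tanh_eq, Real.exp_neg, two_mul, Real.exp_add]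
    field_simp
    ring
  have exp_tendsto : Tendsto (fun x : ℝ => Real.exp (2 * x) + 1) atTop atTop :=
    tendsto_atTop_add_const_right _ _
      (Real.tendsto_exp_atTop.comp (tendsto_id.const_mul_atTop two_pos))
  simpa [funext tanh_eq] using (exp_tendsto.const_div_atTop 2).const_sub 1

lemma tendsto_tanh_atBot : Tendsto Real.tanh atBot (𝓝 (-1)) := by
  simpa [Function.comp_def] using (tendsto_tanh_atTop.comp tendsto_neg_atBot_atTop).neg

lemma cosh_sub_one_le_sq {h : ℝ} (hh : |h| ≤ 1) : Real.cosh h - 1 ≤ h ^ 2 := by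
  have pos := (abs_le.1 (Real.abs_exp_sub_one_sub_id_le hh)).2
  have neg := (abs_le.1 (Real.abs_exp_sub_one_sub_id_le (x := -h) (by rwa [abs_neg]))).2
  rw [Real.cosh_eq]
  linarith [neg_sq h]

lemma sinh_le_two_mul {h : ℝ} (h0 : 0 ≤ h) (h1 : h ≤ 1) : Real.sinh h ≤ 2 * h := by
  have exp_le := (abs_le.1 (Real.abs_exp_sub_one_sub_id_le (abs_le.2 ⟨by linarith, h1⟩))).2
  have le_exp_neg := Real.add_one_le_exp (-h)
  rw [Real.sinh_eq]
  nlinarith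

lemma cosh_add_mul_cosh_sub (y h : ℝ) :
    Real.cosh (y + h) * Real.cosh (y - h) = Real.cosh y ^ 2 + Real.sinh h ^ 2 := by
  rw [Real.cosh_add, Real.cosh_sub]
  linear_combination Real.cosh y ^ 2 * Real.cosh_sq h + Real.sinh h ^ 2 * Real.cosh_sq y

lemma tanh_add_half_sub_tanh_sub_half (y h : ℝ) :
    Real.tanh (y + h / 2) - Real.tanh (y - h / 2)
      = Real.sinh h / (Real.cosh y ^ 2 + Real.sinh (h / 2) ^ 2) := by
  have sinh_eq : Real.sinh h = Real.sinh (y + h / 2) * Real.cosh (y - h / 2)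
      - Real.cosh (y + h / 2) * Real.sinh (y - h / 2) := by
    rw [← Real.sinh_sub]
    congr 1
    ring
  rw [sinh_eq, ← cosh_add_mul_cosh_sub, Real.tanh_eq_sinh_div_cosh, Real.tanh_eq_sinh_div_cosh]
  field_simp

lemma tanh_add_half_sub_tanh_sub_half_le (y : ℝ) {h : ℝ} (h0 : 0 ≤ h) :
    Real.tanh (y + h / 2) - Real.tanh (y - h / 2) ≤ Real.sinh h * (Real.cosh y)⁻¹ ^ 2 := by
  rw [tanh_add_half_sub_tanh_sub_half, inv_pow, ← div_eq_mul_inv]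
  have := Real.sinh_nonneg_iff.2 h0
  gcongr
  exact le_add_of_nonneg_right (sq_nonneg _)

lemma mul_sech_sq_le (y : ℝ) {h : ℝ} (h0 : 0 ≤ h) :
    h * (Real.cosh y)⁻¹ ^ 2
      ≤ Real.cosh (h / 2) ^ 2 * (Real.tanh (y + h / 2) - Real.tanh (y - h / 2)) := by
  have den_le : Real.cosh y ^ 2 + Real.sinh (h / 2) ^ 2
      ≤ Real.cosh (h / 2) ^ 2 * Real.cosh y ^ 2 := by
    nlinarith [Real.cosh_sq y, Real.cosh_sq (h / 2),
      mul_nonneg (sq_nonneg (Real.sinh y)) (sq_nonneg (Real.sinh (h / 2)))]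
  rw [tanh_add_half_sub_tanh_sub_half, inv_pow, ← div_eq_mul_inv, mul_div_assoc',
    div_le_div_iff₀ (by positivity) (by positivity)]
  calc h * (Real.cosh y ^ 2 + Real.sinh (h / 2) ^ 2)
      ≤ Real.sinh h * (Real.cosh (h / 2) ^ 2 * Real.cosh y ^ 2) := by
        have := Real.sinh_nonneg_iff.2 h0
        gcongr
        exact Real.self_le_sinh_iff.2 h0
    _ = Real.cosh (h / 2) ^ 2 * Real.sinh h * Real.cosh y ^ 2 := by ring

lemma sech_le_sech_half_sq (y : ℝ) : (Real.cosh y)⁻¹ ≤ (Real.cosh (y / 2))⁻¹ ^ 2 := by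
  rw [inv_pow]
  refine inv_anti₀ (by positivity) ?_
  rw [show y = 2 * (y / 2) by ring, Real.cosh_two_mul, mul_div_cancel_left₀ _ two_ne_zero]
  exact le_add_of_nonneg_right (sq_nonneg _)

lemma sech_add_add_sech_sub (y h : ℝ) :
    (Real.cosh (y + h))⁻¹ + (Real.cosh (y - h))⁻¹
      = 2 * Real.cosh y * Real.cosh h / (Real.cosh y ^ 2 + Real.sinh h ^ 2) := by
  rw [← cosh_add_mul_cosh_sub]
  field_simp
  rw [Real.cosh_add, Real.cosh_sub]
  ring

lemma abs_sech_second_difference_le (y : ℝ) {h : ℝ} (hh : |h| ≤ 1) :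
    |(Real.cosh (y + h))⁻¹ + (Real.cosh (y - h))⁻¹ - 2 * (Real.cosh y)⁻¹|
      ≤ 2 * h ^ 2 * (Real.cosh y)⁻¹ := by
  have cosh_y_pos := Real.cosh_pos y
  have one_le := Real.one_le_cosh h
  have cosh_le := cosh_sub_one_le_sq hh
  have one_le_y : 1 ≤ Real.cosh y ^ 2 := one_le_pow₀ (Real.one_le_cosh y)
  have den_pos : 0 < Real.cosh y ^ 2 + Real.sinh h ^ 2 := by positivity
  have difference_eq : (Real.cosh (y + h))⁻¹ + (Real.cosh (y - h))⁻¹ - 2 * (Real.cosh y)⁻¹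
      = 2 * (Real.cosh h - 1) * ((Real.cosh y ^ 2 - Real.cosh h - 1)
        / (Real.cosh y ^ 2 + Real.sinh h ^ 2)) * (Real.cosh y)⁻¹ := by
    rw [sech_add_add_sech_sub]
    field_simp
    rw [Real.sinh_sq]
    ring
  have ratio_le : |(Real.cosh y ^ 2 - Real.cosh h - 1)
      / (Real.cosh y ^ 2 + Real.sinh h ^ 2)| ≤ 1 := by
    rw [abs_div, abs_of_pos den_pos, div_le_one den_pos, abs_le, Real.sinh_sq]
    constructor <;> nlinarith
  rw [difference_eq, abs_mul, abs_mul, abs_of_pos (inv_pos.2 cosh_y_pos),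
    abs_of_nonneg (by linarith : 0 ≤ 2 * (Real.cosh h - 1))]
  refine mul_le_mul_of_nonneg_right ?_ (inv_pos.2 cosh_y_pos).le
  exact (mul_le_of_le_one_right (by linarith) ratio_le).trans (by linarith)

end HyperbolicFunctions

section SechLatticeSums

variable {h : ℝ}

lemma hasSum_tanh_differences (h0 : 0 < h) (x : ℝ) :
    HasSum (fun k : ℤ => Real.tanh (h * k - x + h / 2) - Real.tanh (h * k - x - h / 2)) 2 := by
  have mesh_step (k : ℤ) : h * ((k + 1 : ℤ) : ℝ) - x - h / 2 = h * k - x + h / 2 := by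
    push_cast
    ring
  have arg_eq (k : ℤ) : h * k - x - h / 2 = h * (k : ℝ) + (-x - h / 2) := by ring
  have le_succ (k : ℤ) : Real.tanh (h * k - x - h / 2)
      ≤ Real.tanh (h * ((k + 1 : ℤ) : ℝ) - x - h / 2) := by
    rw [mesh_step, ← sub_nonneg, tanh_add_half_sub_tanh_sub_half]
    have := Real.sinh_nonneg_iff.2 h0.le
    positivity
  have at_top : Tendsto (fun k : ℤ => h * k - x - h / 2) atTop atTop := by
    simp only [arg_eq]
    exact tendsto_atTop_add_const_right _ _ (tendsto_intCast_atTop_atTop.const_mul_atTop h0)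
  have at_bot : Tendsto (fun k : ℤ => h * k - x - h / 2) atBot atBot := by
    simp only [arg_eq]
    exact tendsto_atBot_add_const_right _ _
      ((tendsto_intCast_atBot_iff.2 tendsto_id).const_mul_atBot h0)
  have sum := hasSum_int_sub_of_le_succ le_succ (tendsto_tanh_atBot.comp at_bot)
    (tendsto_tanh_atTop.comp at_top)
  simp only [mesh_step] at sum
  norm_num at sum
  exact sum

lemma summable_sech_sq (h0 : 0 < h) (x : ℝ) :
    Summable fun k : ℤ => (Real.cosh (h * k - x))⁻¹ ^ 2 := by
  rw [← summable_mul_left_iff h0.ne']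
  exact ((hasSum_tanh_differences h0 x).summable.mul_left _).of_nonneg_of_le
    (fun k => by positivity) fun k => mul_sech_sq_le _ h0.le

lemma mul_tsum_sech_sq_le (h0 : 0 < h) (h1 : h ≤ 1) (x : ℝ) :
    h * ∑' k : ℤ, (Real.cosh (h * k - x))⁻¹ ^ 2 ≤ 4 := by
  have cosh_half_sq_le : Real.cosh (h / 2) ^ 2 ≤ 2 := by
    have half_le := cosh_sub_one_le_sq (h := h / 2) (abs_le.2 ⟨by linarith, by linarith⟩)
    have sq_le : h ^ 2 ≤ 1 := pow_le_one₀ h0.le h1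
    nlinarith [Real.cosh_pos (h / 2)]
  calc h * ∑' k : ℤ, (Real.cosh (h * k - x))⁻¹ ^ 2
      = ∑' k : ℤ, h * (Real.cosh (h * k - x))⁻¹ ^ 2 := tsum_mul_left.symm
    _ ≤ Real.cosh (h / 2) ^ 2 * 2 :=
        hasSum_le (fun k => mul_sech_sq_le _ h0.le)
          ((summable_sech_sq h0 x).mul_left h).hasSum ((hasSum_tanh_differences h0 x).mul_left _)
    _ ≤ 4 := by linarith

lemma one_le_mul_tsum_sech_sq (h0 : 0 < h) (h1 : h ≤ 1) (x : ℝ) :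
    1 ≤ h * ∑' k : ℤ, (Real.cosh (h * k - x))⁻¹ ^ 2 := by
  have two_le : 2 ≤ Real.sinh h * ∑' k : ℤ, (Real.cosh (h * k - x))⁻¹ ^ 2 :=
    hasSum_le (fun k => tanh_add_half_sub_tanh_sub_half_le _ h0.le)
      (hasSum_tanh_differences h0 x) ((summable_sech_sq h0 x).hasSum.mul_left _)
  have tsum_nonneg : 0 ≤ ∑' k : ℤ, (Real.cosh (h * k - x))⁻¹ ^ 2 :=
    tsum_nonneg fun k => by positivity
  nlinarith [sinh_le_two_mul h0.le h1]

lemma sech_le_sech_sq_halved (h x : ℝ) (k : ℤ) :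
    (Real.cosh (h * k - x))⁻¹ ≤ (Real.cosh (h / 2 * k - x / 2))⁻¹ ^ 2 := by
  convert sech_le_sech_half_sq (h * k - x) using 4
  ring

lemma summable_sech (h0 : 0 < h) (x : ℝ) :
    Summable fun k : ℤ => (Real.cosh (h * k - x))⁻¹ :=
  (summable_sech_sq (half_pos h0) (x / 2)).of_nonneg_of_le
    (fun _ => (inv_pos.2 (Real.cosh_pos _)).le) (sech_le_sech_sq_halved h x)

lemma mul_tsum_sech_le (h0 : 0 < h) (h1 : h ≤ 1) (x : ℝ) :
    h * ∑' k : ℤ, (Real.cosh (h * k - x))⁻¹ ≤ 8 := by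
  have le_halved := (summable_sech h0 x).tsum_le_tsum (sech_le_sech_sq_halved h x)
    (summable_sech_sq (half_pos h0) (x / 2))
  have halved_le := mul_tsum_sech_sq_le (half_pos h0) (by linarith) (x / 2)
  nlinarith

end SechLatticeSums

section SechProduct

variable {ι : Type*} [Fintype ι]

/-- The tensor product `y ↦ ∏ i, 1 / cosh (y i)` of hyperbolic secants: a positive, integrable
test function whose discrete second differences are dominated by the function itself. -/
def sechProd (y : ι → ℝ) : ℝ := ∏ i, (Real.cosh (y i))⁻¹

lemma sechProd_pos (y : ι → ℝ) : 0 < sechProd y :=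
  Finset.prod_pos fun _ _ => inv_pos.2 (Real.cosh_pos _)

lemma sechProd_le_one (y : ι → ℝ) : sechProd y ≤ 1 :=
  Finset.prod_le_one (fun _ _ => (inv_pos.2 (Real.cosh_pos _)).le)
    fun _ _ => inv_le_one_of_one_le₀ (Real.one_le_cosh _)

lemma sechProd_eq_mul_prod_erase [DecidableEq ι] (y : ι → ℝ) (j : ι) :
    sechProd y = (Real.cosh (y j))⁻¹ * ∏ i ∈ Finset.univ.erase j, (Real.cosh (y i))⁻¹ :=
  (Finset.mul_prod_erase _ _ (Finset.mem_univ j)).symm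

lemma sechProd_le_sech (y : ι → ℝ) (j : ι) : sechProd y ≤ (Real.cosh (y j))⁻¹ := by
  classical
  rw [sechProd_eq_mul_prod_erase y j]
  exact mul_le_of_le_one_right (inv_pos.2 (Real.cosh_pos _)).le <|
    Finset.prod_le_one (fun _ _ => (inv_pos.2 (Real.cosh_pos _)).le)
      fun _ _ => inv_le_one_of_one_le₀ (Real.one_le_cosh _)

lemma sechProd_add_single [DecidableEq ι] (y : ι → ℝ) (j : ι) (s : ℝ) :
    sechProd (y + Pi.single j s)
      = (Real.cosh (y j + s))⁻¹ * ∏ i ∈ Finset.univ.erase j, (Real.cosh (y i))⁻¹ := by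
  rw [sechProd_eq_mul_prod_erase _ j, Pi.add_apply, Pi.single_eq_same]
  congr 1
  refine Finset.prod_congr rfl fun i hi => ?_
  rw [Pi.add_apply, Pi.single_eq_of_ne (Finset.ne_of_mem_erase hi), add_zero]

lemma abs_sechProd_second_difference_le [DecidableEq ι] (y : ι → ℝ) (j : ι) {h : ℝ}
    (hh : |h| ≤ 1) :
    |sechProd (y + Pi.single j h) + sechProd (y - Pi.single j h) - 2 * sechProd y|
      ≤ 2 * h ^ 2 * sechProd y := by
  have rest_nonneg : 0 ≤ ∏ i ∈ Finset.univ.erase j, (Real.cosh (y i))⁻¹ :=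
    Finset.prod_nonneg fun _ _ => (inv_pos.2 (Real.cosh_pos _)).le
  rw [sub_eq_add_neg y, ← Pi.single_neg, sechProd_add_single, sechProd_add_single,
    sechProd_eq_mul_prod_erase y j, ← sub_eq_add_neg, ← add_mul, ← mul_assoc, ← sub_mul, abs_mul,
    abs_of_nonneg rest_nonneg, ← mul_assoc]
  exact mul_le_mul_of_nonneg_right (abs_sech_second_difference_le (y j) hh) rest_nonneg

lemma abs_sum_sechProd_second_difference_div_le [DecidableEq ι] (y : ι → ℝ) {h : ℝ}
    (h0 : 0 < h) (h1 : h ≤ 1) :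
    |∑ j, (sechProd (y + Pi.single j h) + sechProd (y - Pi.single j h) - 2 * sechProd y) / h ^ 2|
      ≤ 2 * Fintype.card ι * sechProd y := by
  have term_le (j : ι) :
      |(sechProd (y + Pi.single j h) + sechProd (y - Pi.single j h) - 2 * sechProd y) / h ^ 2|
        ≤ 2 * sechProd y := by
    rw [abs_div, abs_of_pos (pow_pos h0 2), div_le_iff₀ (pow_pos h0 2), mul_right_comm]
    exact abs_sechProd_second_difference_le y j (by rwa [abs_of_pos h0])
  calc _ ≤ ∑ _j : ι, 2 * sechProd y :=
        (Finset.abs_sum_le_sum_abs _ _).trans (Finset.sum_le_sum fun j _ => term_le j)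
    _ = 2 * Fintype.card ι * sechProd y := by
        rw [Finset.sum_const, Finset.card_univ, nsmul_eq_mul]
        ring

end SechProduct

section SechProductLatticeSums

variable {d : ℕ} {h : ℝ}

lemma hasSum_sechProd_pt (h0 : 0 < h) (x : Fin d → ℝ) :
    HasSum (fun k => sechProd (pt d h k - x))
      (∏ i, ∑' n : ℤ, (Real.cosh (h * n - x i))⁻¹) :=
  hasSum_prod_fin_apply (f := fun i n => (Real.cosh (h * (n : ℤ) - x i))⁻¹)
    (fun _ _ => (inv_pos.2 (Real.cosh_pos _)).le) fun i => (summable_sech h0 (x i)).hasSum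

lemma hasSum_sechProd_pt_sq (h0 : 0 < h) (x : Fin d → ℝ) :
    HasSum (fun k => sechProd (pt d h k - x) ^ 2)
      (∏ i, ∑' n : ℤ, (Real.cosh (h * n - x i))⁻¹ ^ 2) := by
  simp only [sechProd, ← Finset.prod_pow]
  exact hasSum_prod_fin_apply (f := fun i n => (Real.cosh (h * (n : ℤ) - x i))⁻¹ ^ 2)
    (fun _ _ => sq_nonneg _) fun i => (summable_sech_sq h0 (x i)).hasSum

lemma pow_mul_tsum_sechProd_pt_le (h0 : 0 < h) (h1 : h ≤ 1) (x : Fin d → ℝ) :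
    h ^ d * ∑' k, sechProd (pt d h k - x) ≤ 8 ^ d := by
  rw [(hasSum_sechProd_pt h0 x).tsum_eq, ← Fin.prod_const d h,
    ← Finset.prod_mul_distrib, ← Fin.prod_const]
  exact Finset.prod_le_prod
    (fun i _ => mul_nonneg h0.le (tsum_nonneg fun _ => (inv_pos.2 (Real.cosh_pos _)).le))
    fun i _ => mul_tsum_sech_le h0 h1 (x i)

lemma pow_mul_tsum_sechProd_pt_sq_le (h0 : 0 < h) (h1 : h ≤ 1) (x : Fin d → ℝ) :
    h ^ d * ∑' k, sechProd (pt d h k - x) ^ 2 ≤ 4 ^ d := by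
  rw [(hasSum_sechProd_pt_sq h0 x).tsum_eq, ← Fin.prod_const d h,
    ← Finset.prod_mul_distrib, ← Fin.prod_const]
  exact Finset.prod_le_prod (fun i _ => mul_nonneg h0.le (tsum_nonneg fun _ => sq_nonneg _))
    fun i _ => mul_tsum_sech_sq_le h0 h1 (x i)

lemma one_le_pow_mul_tsum_sechProd_pt_sq (h0 : 0 < h) (h1 : h ≤ 1) (x : Fin d → ℝ) :
    1 ≤ h ^ d * ∑' k, sechProd (pt d h k - x) ^ 2 := by
  rw [(hasSum_sechProd_pt_sq h0 x).tsum_eq, ← Fin.prod_const d h,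
    ← Finset.prod_mul_distrib]
  exact Finset.one_le_prod fun i _ => one_le_mul_tsum_sech_sq h0 h1 (x i)

lemma pt_add_latE (h : ℝ) (k : Fin d → ℤ) (j : Fin d) :
    pt d h (k + latE d j) = pt d h k + Pi.single j h := by
  ext i
  by_cases hij : i = j <;> simp [pt, latE, hij, mul_add]

lemma pt_sub_latE (h : ℝ) (k : Fin d → ℤ) (j : Fin d) :
    pt d h (k - latE d j) = pt d h k - Pi.single j h := by
  rw [eq_sub_iff_add_eq, ← pt_add_latE, sub_add_cancel]

end SechProductLatticeSums

section PositivityPreservingOperators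

open scoped ComplexOrder

variable {ι : Type*} {p : ℝ≥0∞} [Fact (1 ≤ p)]

/-- An operator on `ℓᵖ(ι)` that maps pointwise nonnegative functions to pointwise nonnegative
functions; nonnegativity of a complex number includes being real. -/
def PositivityPreserving (A : lp (fun _ : ι => ℂ) p →L[ℂ] lp (fun _ : ι => ℂ) p) : Prop :=
  ∀ f, (∀ k, 0 ≤ f k) → ∀ k, 0 ≤ A f k

variable {A P : lp (fun _ : ι => ℂ) p →L[ℂ] lp (fun _ : ι => ℂ) p} {f : lp (fun _ : ι => ℂ) p}

lemma PositivityPreserving.apply_le_apply {g : lp (fun _ : ι => ℂ) p}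
    (hA : PositivityPreserving A) (hfg : ∀ k, f k ≤ g k) (k : ι) : A f k ≤ A g k := by
  have difference_nonneg := hA (g - f) (fun k => by simpa using hfg k) k
  rwa [map_sub, lp.coeFn_sub, Pi.sub_apply, sub_nonneg] at difference_nonneg

lemma PositivityPreserving.pow_apply_le (hA : PositivityPreserving A) {c : ℝ} (hc : 0 ≤ c)
    (hf : ∀ k, A f k ≤ c * f k) (n : ℕ) (k : ι) : (A ^ n) f k ≤ c ^ n * f k := by
  have hc_pow (n : ℕ) : (0 : ℂ) ≤ (c : ℂ) ^ n := pow_nonneg (Complex.zero_le_real.2 hc) n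
  induction n generalizing k with
  | zero => simp
  | succ n ih =>
    calc (A ^ (n + 1)) f k = A ((A ^ n) f) k := by rw [pow_succ', mul_apply_eq_comp]
      _ ≤ A ((c : ℂ) ^ n • f) k := hA.apply_le_apply ih k
      _ = c ^ n * A f k := by rw [map_smul, lp.coeFn_smul, Pi.smul_apply, smul_eq_mul]
      _ ≤ c ^ n * (c * f k) := mul_le_mul_of_nonneg_left (hf k) (hc_pow n)
      _ = c ^ (n + 1) * f k := by ring

lemma hasSum_exp_smul_apply (A : lp (fun _ : ι => ℂ) p →L[ℂ] lp (fun _ : ι => ℂ) p) (t : ℂ)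
    (f : lp (fun _ : ι => ℂ) p) (k : ι) :
    HasSum (fun n : ℕ => (n.factorial : ℂ)⁻¹ * t ^ n * (A ^ n) f k)
      (NormedSpace.exp (t • A) f k) := by
  have series := ((NormedSpace.exp_series_hasSum_exp' (𝕂 := ℂ) (t • A)).mapL
    (ContinuousLinearMap.apply ℂ _ f)).mapL (lp.evalCLM ℂ (fun _ : ι => ℂ) (p := p) k)
  refine series.congr_fun fun n => ?_
  rw [smul_pow, smul_smul]
  rfl

lemma PositivityPreserving.exp_smul_apply_le (hA : PositivityPreserving A) {c t : ℝ} (hc : 0 ≤ c)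
    (ht : 0 ≤ t) (hf : ∀ k, A f k ≤ c * f k) (k : ι) :
    NormedSpace.exp ((t : ℂ) • A) f k ≤ Real.exp (t * c) * f k := by
  have scalar_series : HasSum (fun n : ℕ => (n.factorial : ℂ)⁻¹ * (t : ℂ) ^ n * (c ^ n * f k))
      (Real.exp (t * c) * f k) := by
    have series := (NormedSpace.exp_series_hasSum_exp' (𝕂 := ℂ) ((t : ℂ) * c)).mul_right (f k)
    rw [← Complex.exp_eq_exp_ℂ] at series
    simpa only [smul_eq_mul, mul_pow, mul_assoc, Complex.ofReal_exp, Complex.ofReal_mul]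
      using series
  refine hasSum_le (fun n => ?_) (hasSum_exp_smul_apply A t f k) scalar_series
  have coeff_nonneg : (0 : ℂ) ≤ (n.factorial : ℂ)⁻¹ * (t : ℂ) ^ n := by
    have real_nonneg := Complex.zero_le_real.2 (by positivity : 0 ≤ (n.factorial : ℝ)⁻¹ * t ^ n)
    push_cast at real_nonneg
    exact real_nonneg
  exact mul_le_mul_of_nonneg_left (hA.pow_apply_le hc hf n k) coeff_nonneg

lemma exp_neg_smul_eq_smul_exp_shift {𝔸 : Type*} [NormedRing 𝔸] [NormedAlgebra ℂ 𝔸]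
    [CompleteSpace 𝔸] (t c : ℂ) (a : 𝔸) :
    NormedSpace.exp ((-t) • a)
      = Complex.exp (-(t * c)) • NormedSpace.exp (t • (c • (1 : 𝔸) - a)) := by
  have shift : (-t) • a = algebraMap ℂ 𝔸 (-(t * c)) + t • (c • (1 : 𝔸) - a) := by
    rw [Algebra.algebraMap_eq_smul_one]
    module
  let _ : NormedAlgebra ℚ 𝔸 := NormedAlgebra.restrictScalars ℚ ℂ 𝔸
  rw [shift, NormedSpace.exp_add_of_commute (Algebra.commutes _ _),
    ← NormedSpace.algebraMap_exp_comm, ← Complex.exp_eq_exp_ℂ, ← Algebra.smul_def]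

lemma smul_one_sub_apply (c : ℂ) (P : lp (fun _ : ι => ℂ) p →L[ℂ] lp (fun _ : ι => ℂ) p)
    (f : lp (fun _ : ι => ℂ) p) (k : ι) : (c • 1 - P) f k = c * f k - P f k :=
  rfl

lemma PositivityPreserving.mono {c c' : ℝ} (hcc' : c ≤ c')
    (hP : PositivityPreserving ((c : ℂ) • 1 - P)) :
    PositivityPreserving ((c' : ℂ) • 1 - P) := by
  intro f hf k
  have split : ((c' : ℂ) • 1 - P) f k = ((c : ℂ) • 1 - P) f k + ((c' - c : ℝ) : ℂ) * f k := by
    rw [smul_one_sub_apply, smul_one_sub_apply, Complex.ofReal_sub]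
    ring
  rw [split]
  exact add_nonneg (hP f hf k)
    (mul_nonneg (Complex.zero_le_real.2 (sub_nonneg.2 hcc')) (hf k))

variable {c μ t : ℝ}

theorem exp_neg_smul_apply_le (hP : PositivityPreserving ((c : ℂ) • 1 - P)) (ht : 0 ≤ t)
    (hf : ∀ k, μ * f k ≤ P f k) (k : ι) :
    NormedSpace.exp ((-(t : ℂ)) • P) f k ≤ Real.exp (-(t * μ)) * f k := by
  have shifted_le (k : ι) :
      (((max c μ : ℝ) : ℂ) • 1 - P) f k ≤ ((max c μ - μ : ℝ) : ℂ) * f k := by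
    rw [smul_one_sub_apply, Complex.ofReal_sub, sub_mul]
    exact sub_le_sub_left (hf k) _
  have exp_le := (hP.mono (le_max_left c μ)).exp_smul_apply_le
    (sub_nonneg.2 (le_max_right c μ)) ht shifted_le k
  calc NormedSpace.exp ((-(t : ℂ)) • P) f k
      = Real.exp (-(t * max c μ))
          * NormedSpace.exp ((t : ℂ) • (((max c μ : ℝ) : ℂ) • 1 - P)) f k := by
        rw [Complex.ofReal_exp, Complex.ofReal_neg, Complex.ofReal_mul]
        exact congrArg (fun B => B f k) (exp_neg_smul_eq_smul_exp_shift (t : ℂ) _ P)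
    _ ≤ Real.exp (-(t * max c μ)) * (Real.exp (t * (max c μ - μ)) * f k) :=
        mul_le_mul_of_nonneg_left exp_le (Complex.zero_le_real.2 (Real.exp_pos _).le)
    _ = Real.exp (-(t * μ)) * f k := by
        rw [← mul_assoc, ← Complex.ofReal_mul, ← Real.exp_add]
        ring_nf

theorem le_exp_neg_smul_apply (hP : PositivityPreserving ((c : ℂ) • 1 - P)) (ht : 0 ≤ t)
    (hf : ∀ k, P f k ≤ μ * f k) (k : ι) :
    Real.exp (-(t * μ)) * f k ≤ NormedSpace.exp ((-(t : ℂ)) • P) f k := by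
  simpa using exp_neg_smul_apply_le (f := -f) hP ht (fun k => by simpa using hf k) k

end PositivityPreservingOperators

section SchrodingerOperator

variable {ι ι' E : Type*} [NormedAddCommGroup E] {p : ℝ≥0∞}

lemma memℓp_comp_equiv {f : ι → E} (hf : Memℓp f p) (σ : ι' ≃ ι) :
    Memℓp (fun k => f (σ k)) p := by
  rcases p.trichotomy with rfl | rfl | hp
  · rw [memℓp_zero_iff] at hf ⊢
    exact hf.preimage σ.injective.injOn
  · rw [memℓp_infty_iff] at hf ⊢
    exact hf.mono (Set.range_comp_subset_range σ fun k => ‖f k‖)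
  · rw [memℓp_gen_iff hp] at hf ⊢
    exact σ.summable_iff.2 hf

/-- Composition with an equivalence of the index sets, as an isometry between `ℓᵖ` spaces. -/
def lpReindex (𝕜 : Type*) [NormedRing 𝕜] [Module 𝕜 E] [IsBoundedSMul 𝕜 E] [Fact (1 ≤ p)]
    (σ : ι' ≃ ι) : lp (fun _ : ι => E) p →ₗᵢ[𝕜] lp (fun _ : ι' => E) p where
  toFun f := ⟨fun k => f (σ k), memℓp_comp_equiv (lp.memℓp f) σ⟩
  map_add' _ _ := rfl
  map_smul' _ _ := rfl
  norm_map' f := by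
    rcases p.dichotomy with rfl | hp
    · exact (lp.norm_eq_ciSup _).trans ((σ.iSup_comp (g := fun k => ‖f k‖)).trans
        (lp.norm_eq_ciSup f).symm)
    · have hp_pos := zero_lt_one.trans_le hp
      rw [lp.norm_eq_tsum_rpow hp_pos, lp.norm_eq_tsum_rpow hp_pos]
      exact congrArg (· ^ (1 / p.toReal)) (σ.tsum_eq fun k => ‖f k‖ ^ p.toReal)

variable {d : ℕ} {M : ℝ} {V : (Fin d → ℝ) → ℝ}

theorem exists_realizesPh (h : ℝ) (hV : ∀ y, |V y| ≤ M) :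
    ∃ P : Hsp d →L[ℂ] Hsp d, RealizesPh d h V P := by
  have M_nonneg : 0 ≤ M := (abs_nonneg _).trans (hV 0)
  let potential : Hsp d →L[ℂ] Hsp d := lp.mapCLM 2
    (fun k : Fin d → ℤ => ContinuousLinearMap.lsmul ℂ ℂ (V (pt d h k) : ℂ)) M_nonneg fun k => by
      simpa using hV (pt d h k)
  let shift (v : Fin d → ℤ) : Hsp d →L[ℂ] Hsp d :=
    (lpReindex ℂ (Equiv.addRight v)).toContinuousLinearMap
  refine ⟨potential - ∑ j, ((h : ℂ) ^ 2)⁻¹ • (shift (latE d j) + shift (-latE d j) - (2 : ℂ) • 1),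
    fun w k => ?_⟩
  rw [sub_apply, sum_apply, lp.coeFn_sub, Pi.sub_apply, lp.coeFn_sum, Finset.sum_apply, discLap,
    neg_add_eq_sub]
  refine congrArg _ (Finset.sum_congr rfl fun j _ => ?_)
  rw [div_eq_inv_mul]
  rfl

end SchrodingerOperator

section SchrodingerSemigroup

open scoped ComplexOrder

variable {d : ℕ} {h M t : ℝ} {V : (Fin d → ℝ) → ℝ} {P : Hsp d →L[ℂ] Hsp d}

lemma discLap_eq_sum_neighbors_sub (h : ℝ) (u : (Fin d → ℤ) → ℂ) (k : Fin d → ℤ) :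
    discLap d h u k = ∑ j, (((h ^ 2)⁻¹ : ℝ) : ℂ) * (u (k + latE d j) + u (k - latE d j))
      - ((2 * d / h ^ 2 : ℝ) : ℂ) * u k := by
  have diagonal : ((2 * d / h ^ 2 : ℝ) : ℂ) * u k
      = ∑ _j : Fin d, (((h ^ 2)⁻¹ : ℝ) : ℂ) * (2 * u k) := by
    rw [Finset.sum_const, Finset.card_univ, Fintype.card_fin, nsmul_eq_mul]
    push_cast
    ring
  rw [diagonal, ← Finset.sum_sub_distrib]
  refine Finset.sum_congr rfl fun j _ => ?_
  push_cast
  ring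

theorem positivityPreserving_smul_one_sub_of_realizesPh (hP : RealizesPh d h V P)
    (hV : ∀ y, V y ≤ M) : PositivityPreserving (((2 * d / h ^ 2 + M : ℝ) : ℂ) • 1 - P) := by
  intro f hf k
  have apply_eq : (((2 * d / h ^ 2 + M : ℝ) : ℂ) • 1 - P) f k
      = ∑ j, (((h ^ 2)⁻¹ : ℝ) : ℂ) * (f (k + latE d j) + f (k - latE d j))
        + ((M - V (pt d h k) : ℝ) : ℂ) * f k := by
    rw [smul_one_sub_apply, hP, discLap_eq_sum_neighbors_sub]
    push_cast
    ring
  rw [apply_eq]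
  refine add_nonneg (Finset.sum_nonneg fun j _ => ?_) ?_
  · exact mul_nonneg (Complex.zero_le_real.2 (by positivity)) (add_nonneg (hf _) (hf _))
  · exact mul_nonneg (Complex.zero_le_real.2 (sub_nonneg.2 (hV _))) (hf k)

/-- The element `k ↦ ∏ i, 1 / cosh (h k_i - x_i)` of `ℓ²(hℤ^d)`, a bump of unit width centred
at `x`; it is the initial datum to which observability is applied. -/
def sechBump (h0 : 0 < h) (x : Fin d → ℝ) : Hsp d :=
  ⟨fun k => (sechProd (pt d h k - x) : ℂ), (memℓp_gen_iff (by norm_num)).2 <| by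
    simpa using (hasSum_sechProd_pt_sq h0 x).summable⟩

lemma sechBump_apply (h0 : 0 < h) (x : Fin d → ℝ) (k : Fin d → ℤ) :
    sechBump h0 x k = (sechProd (pt d h k - x) : ℂ) :=
  rfl

lemma exists_abs_le_realizesPh_sechBump (hP : RealizesPh d h V P) (hV : ∀ y, |V y| ≤ M)
    (h0 : 0 < h) (h1 : h ≤ 1) (x : Fin d → ℝ) (k : Fin d → ℤ) :
    ∃ r : ℝ, P (sechBump h0 x) k = r ∧ |r| ≤ (2 * d + M) * sechProd (pt d h k - x) := by
  set y := pt d h k - x with y_def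
  have laplacian_le := abs_sum_sechProd_second_difference_div_le y h0 h1
  rw [Fintype.card_fin] at laplacian_le
  refine ⟨-∑ j, (sechProd (y + Pi.single j h) + sechProd (y - Pi.single j h) - 2 * sechProd y)
    / h ^ 2 + V (pt d h k) * sechProd y, ?_, ?_⟩
  · simp only [hP (sechBump h0 x) k, discLap, sechBump_apply, pt_add_latE, pt_sub_latE,
      add_sub_right_comm, sub_right_comm _ (Pi.single _ h) x, ← y_def]
    push_cast
    rfl
  · calc _ ≤ 2 * d * sechProd y + M * sechProd y := by
          refine (abs_add_le _ _).trans (add_le_add (by rwa [abs_neg]) ?_)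
          rw [abs_mul, abs_of_pos (sechProd_pos y)]
          exact mul_le_mul_of_nonneg_right (hV _) (sechProd_pos y).le
      _ = (2 * d + M) * sechProd y := (add_mul _ _ _).symm

theorem exp_neg_smul_sechBump_mem_Icc (hP : RealizesPh d h V P) (hV : ∀ y, |V y| ≤ M)
    (h0 : 0 < h) (h1 : h ≤ 1) (ht : 0 ≤ t) (x : Fin d → ℝ) (k : Fin d → ℤ) :
    NormedSpace.exp ((-(t : ℂ)) • P) (sechBump h0 x) k
      ∈ Set.Icc ((Real.exp (-(t * (2 * d + M))) * sechProd (pt d h k - x) : ℝ) : ℂ)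
        (Real.exp (t * (2 * d + M)) * sechProd (pt d h k - x) : ℝ) := by
  have positivity_shifted := positivityPreserving_smul_one_sub_of_realizesPh hP
    fun y => (le_abs_self _).trans (hV y)
  have bounds (k : Fin d → ℤ) := exists_abs_le_realizesPh_sechBump hP hV h0 h1 x k
  rw [Complex.ofReal_mul, Complex.ofReal_mul]
  constructor
  · refine le_exp_neg_smul_apply (f := sechBump h0 x) positivity_shifted ht (fun k => ?_) k
    obtain ⟨r, apply_eq, r_le⟩ := bounds k
    rw [apply_eq, sechBump_apply, ← Complex.ofReal_mul, Complex.real_le_real]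
    exact (abs_le.1 r_le).2
  · rw [← neg_neg (t * _), ← mul_neg]
    refine exp_neg_smul_apply_le (f := sechBump h0 x) positivity_shifted ht (fun k => ?_) k
    obtain ⟨r, apply_eq, r_le⟩ := bounds k
    rw [apply_eq, sechBump_apply, ← Complex.ofReal_mul, Complex.real_le_real, neg_mul]
    exact (abs_le.1 r_le).1

end SchrodingerSemigroup

section LocalObservation

open scoped ComplexOrder

variable {d : ℕ} {h L M t : ℝ} {ω : Set (Fin d → ℝ)} {V : (Fin d → ℝ) → ℝ}
  {P : Hsp d →L[ℂ] Hsp d}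

lemma summable_norm_sq (w : Hsp d) : Summable fun k => ‖w k‖ ^ 2 := by
  simpa using (memℓp_gen_iff (p := 2) (by norm_num)).1 (lp.memℓp w)

lemma norm_sq_eq_tsum (w : Hsp d) : ‖w‖ ^ 2 = ∑' k, ‖w k‖ ^ 2 := by
  simpa using lp.norm_rpow_eq_tsum (p := 2) (by norm_num) w

lemma summable_indicator_norm_sq (h : ℝ) (ω : Set (Fin d → ℝ)) (w : Hsp d) :
    Summable fun k => ω.indicator (fun _ => ‖w k‖ ^ 2) (pt d h k) :=
  (summable_norm_sq w).of_nonneg_of_le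
    (fun _ => Set.indicator_nonneg (fun _ _ => sq_nonneg _) _)
    fun k => Set.indicator_le_self' (f := fun _ => ‖w k‖ ^ 2) (fun _ _ => sq_nonneg _) _

lemma sqNormOn_nonneg (h : ℝ) (ω : Set (Fin d → ℝ)) (w : Hsp d) : 0 ≤ sqNormOn d h ω w :=
  tsum_nonneg fun _ => Set.indicator_nonneg (fun _ _ => sq_nonneg _) _

lemma sqNormOn_le_of_norm_le {v w : Hsp d} {c : ℝ} (hvw : ∀ k, ‖w k‖ ≤ c * ‖v k‖) (h : ℝ)
    (ω : Set (Fin d → ℝ)) : sqNormOn d h ω w ≤ c ^ 2 * sqNormOn d h ω v := by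
  rw [sqNormOn, sqNormOn, ← tsum_mul_left]
  refine (summable_indicator_norm_sq h ω w).tsum_le_tsum (fun k => ?_)
    ((summable_indicator_norm_sq h ω v).mul_left _)
  rw [← Set.indicator_const_mul]
  refine Set.indicator_le_indicator ?_
  rw [← mul_pow]
  exact pow_le_pow_left₀ (norm_nonneg _) (hvw k) 2

lemma norm_sechBump_apply (h0 : 0 < h) (x : Fin d → ℝ) (k : Fin d → ℤ) :
    ‖sechBump h0 x k‖ = sechProd (pt d h k - x) := by
  rw [sechBump_apply, Complex.norm_real, Real.norm_of_nonneg (sechProd_pos _).le]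

lemma norm_exp_neg_smul_sechBump_apply_le (hP : RealizesPh d h V P) (hV : ∀ y, |V y| ≤ M)
    (h0 : 0 < h) (h1 : h ≤ 1) (ht : 0 ≤ t) (x : Fin d → ℝ) (k : Fin d → ℤ) :
    ‖NormedSpace.exp ((-(t : ℂ)) • P) (sechBump h0 x) k‖
      ≤ Real.exp (t * (2 * d + M)) * ‖sechBump h0 x k‖ := by
  obtain ⟨le_exp, exp_le⟩ := exp_neg_smul_sechBump_mem_Icc hP hV h0 h1 ht x k
  have sechProd_nonneg := (sechProd_pos (pt d h k - x)).le
  have exp_nonneg := (Complex.zero_le_real.2 (by positivity)).trans le_exp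
  rw [norm_sechBump_apply]
  refine (CStarAlgebra.norm_le_norm_of_nonneg_of_le exp_nonneg exp_le).trans_eq ?_
  rw [Complex.norm_real, Real.norm_of_nonneg (by positivity)]

lemma exp_mul_norm_sechBump_le (hP : RealizesPh d h V P) (hV : ∀ y, |V y| ≤ M)
    (h0 : 0 < h) (h1 : h ≤ 1) (ht : 0 ≤ t) (x : Fin d → ℝ) :
    Real.exp (-(t * (2 * d + M))) * ‖sechBump h0 x‖
      ≤ ‖NormedSpace.exp ((-(t : ℂ)) • P) (sechBump h0 x)‖ := by
  have norm_smul_eq := norm_smul (Real.exp (-(t * (2 * d + M))) : ℂ) (sechBump h0 x)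
  rw [Complex.norm_real, Real.norm_of_nonneg (Real.exp_pos _).le] at norm_smul_eq
  rw [← norm_smul_eq]
  refine lp.norm_mono two_ne_zero fun k => ?_
  have le_exp := (exp_neg_smul_sechBump_mem_Icc hP hV h0 h1 ht x k).1
  rw [Complex.ofReal_mul, ← sechBump_apply h0 x k] at le_exp
  refine CStarAlgebra.norm_le_norm_of_nonneg_of_le ?_ le_exp
  exact mul_nonneg (Complex.zero_le_real.2 (Real.exp_pos _).le)
    (Complex.zero_le_real.2 (sechProd_pos _).le)

lemma one_le_pow_mul_norm_sechBump_sq (h0 : 0 < h) (h1 : h ≤ 1) (x : Fin d → ℝ) :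
    1 ≤ h ^ d * ‖sechBump h0 x‖ ^ 2 := by
  simpa only [norm_sq_eq_tsum, norm_sechBump_apply]
    using one_le_pow_mul_tsum_sechProd_pt_sq h0 h1 x

lemma pow_mul_norm_sechBump_sq_le (h0 : 0 < h) (h1 : h ≤ 1) (x : Fin d → ℝ) :
    h ^ d * ‖sechBump h0 x‖ ^ 2 ≤ 4 ^ d := by
  simpa only [norm_sq_eq_tsum, norm_sechBump_apply]
    using pow_mul_tsum_sechProd_pt_sq_le h0 h1 x

lemma finite_setOf_pt_mem_Qcube (h0 : 0 < h) (L : ℝ) (x : Fin d → ℝ) :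
    {k | pt d h k ∈ Qcube d L x}.Finite := by
  refine (Set.finite_Icc (fun i => ⌈(x i - L / 2) / h⌉)
    (fun i => ⌊(x i + L / 2) / h⌋)).subset fun k hk => ?_
  have abs_le_half (i : Fin d) : |h * k i - x i| ≤ L / 2 := hk i
  refine ⟨fun i => ?_, fun i => ?_⟩
  · rw [Int.ceil_le, div_le_iff₀' h0]
    linarith [(abs_le.1 (abs_le_half i)).1]
  · rw [Int.le_floor, le_div_iff₀' h0]
    linarith [(abs_le.1 (abs_le_half i)).2]

lemma hasSum_indicator_one_of_finite {β : Type*} {s : Set β} (hs : s.Finite) :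
    HasSum (s.indicator fun _ => (1 : ℝ)) (Nat.card s) := by
  have := hs.fintype
  rw [← hasSum_subtype_iff_indicator, Nat.card_eq_fintype_card, Fintype.card_eq_sum_ones,
    Nat.cast_sum]
  simpa only [Nat.cast_one, Function.comp_def] using hasSum_fintype fun _ : s => (1 : ℝ)

lemma sechProd_le_sech_of_notMem_Qcube {y x : Fin d → ℝ} (hL : 0 ≤ L) (hy : y ∉ Qcube d L x) :
    sechProd (y - x) ≤ (Real.cosh (L / 2))⁻¹ := by
  obtain ⟨i, hi⟩ : ∃ i, L / 2 < |y i - x i| := by simpa [Qcube] using hy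
  refine (sechProd_le_sech _ i).trans (inv_anti₀ (Real.cosh_pos _) ?_)
  rw [Real.cosh_le_cosh, abs_of_nonneg (by positivity)]
  exact hi.le

lemma sqNormOn_sechBump_le (ω : Set (Fin d → ℝ)) (h0 : 0 < h) (hL : 0 ≤ L) (x : Fin d → ℝ) :
    sqNormOn d h ω (sechBump h0 x)
      ≤ Nat.card {k : Fin d → ℤ // pt d h k ∈ ω ∩ Qcube d L x}
        + (Real.cosh (L / 2))⁻¹ * ∑' k, sechProd (pt d h k - x) := by
  have finite_inter : {k | pt d h k ∈ ω ∩ Qcube d L x}.Finite :=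
    (finite_setOf_pt_mem_Qcube h0 L x).subset fun k hk => hk.2
  refine hasSum_le (fun k => ?_) (summable_indicator_norm_sq h ω (sechBump h0 x)).hasSum
    ((hasSum_indicator_one_of_finite finite_inter).add
      ((hasSum_sechProd_pt h0 x).summable.hasSum.mul_left _))
  have bump_pos := sechProd_pos (pt d h k - x)
  have bump_le := sechProd_le_one (pt d h k - x)
  have sech_pos := inv_pos.2 (Real.cosh_pos (L / 2))
  rw [norm_sechBump_apply]
  by_cases mem_ω : pt d h k ∈ ω
  · rw [Set.indicator_of_mem mem_ω]
    by_cases mem_cube : pt d h k ∈ Qcube d L x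
    · rw [Set.indicator_of_mem (show k ∈ {k | pt d h k ∈ ω ∩ Qcube d L x} from ⟨mem_ω, mem_cube⟩)]
      nlinarith [mul_pos sech_pos bump_pos]
    · rw [Set.indicator_of_notMem fun hk => mem_cube hk.2, zero_add, sq]
      exact mul_le_mul_of_nonneg_right (sechProd_le_sech_of_notMem_Qcube hL mem_cube) bump_pos.le
  · rw [Set.indicator_of_notMem mem_ω, Set.indicator_of_notMem fun hk => mem_ω hk.1, zero_add]
    positivity

end LocalObservation

section Thickness

variable {d : ℕ} {h L M T C r : ℝ} {ω : Set (Fin d → ℝ)} {V : (Fin d → ℝ) → ℝ}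
  {P : Hsp d →L[ℂ] Hsp d}

/-- The observability inequality for `e^{-tP_h}` from `ω` at the single scale `h` and up to
time `T`, with cost `C`, relaxed by the error term `r ‖u₀‖²`. The operator `P_h` enters through
every bounded operator realizing it. -/
def RelaxedObservable (d : ℕ) (h : ℝ) (ω : Set (Fin d → ℝ)) (V : (Fin d → ℝ) → ℝ)
    (T C r : ℝ) : Prop :=
  ∀ P : Hsp d →L[ℂ] Hsp d, RealizesPh d h V P → ∀ u₀ : Hsp d,
    ‖NormedSpace.exp ((-(T : ℂ)) • P) u₀‖ ^ 2
      ≤ C * (∫ t in Set.Ioc (0 : ℝ) T, sqNormOn d h ω (NormedSpace.exp ((-(t : ℂ)) • P) u₀))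
        + r * ‖u₀‖ ^ 2

/-- Thickness of `ω`: in all cubes of some fixed side `L` it occupies at least a fixed
proportion `γ` of the volume. -/
def IsThick (d : ℕ) (ω : Set (Fin d → ℝ)) : Prop :=
  ∃ L > (0 : ℝ), ∃ γ : ℝ, 0 < γ ∧ γ ≤ 1 ∧ ∀ x : Fin d → ℝ,
    ENNReal.ofReal γ * volume (Qcube d L fun _ => 0) ≤ volume (ω ∩ Qcube d L x)

lemma setIntegral_sqNormOn_exp_neg_smul_sechBump_le (hP : RealizesPh d h V P)
    (hV : ∀ y, |V y| ≤ M) (h0 : 0 < h) (h1 : h ≤ 1) (hT : 0 ≤ T) (ω : Set (Fin d → ℝ))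
    (x : Fin d → ℝ) :
    ∫ t in Set.Ioc 0 T, sqNormOn d h ω (NormedSpace.exp ((-(t : ℂ)) • P) (sechBump h0 x))
      ≤ Real.exp (T * (2 * d + M)) ^ 2 * sqNormOn d h ω (sechBump h0 x) * T := by
  have M_nonneg : 0 ≤ M := (abs_nonneg _).trans (hV 0)
  have bound : ∀ t ∈ Set.Ioc 0 T,
      ‖sqNormOn d h ω (NormedSpace.exp ((-(t : ℂ)) • P) (sechBump h0 x))‖
        ≤ Real.exp (T * (2 * d + M)) ^ 2 * sqNormOn d h ω (sechBump h0 x) := by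
    intro t ht
    rw [Real.norm_of_nonneg (sqNormOn_nonneg h ω _)]
    refine sqNormOn_le_of_norm_le (fun k => ?_) h ω
    refine (norm_exp_neg_smul_sechBump_apply_le hP hV h0 h1 ht.1.le x k).trans ?_
    gcongr
    exact ht.2
  refine (le_abs_self _).trans
    ((norm_setIntegral_le_of_norm_le_const measure_Ioc_lt_top bound).trans_eq ?_)
  rw [Real.volume_real_Ioc_of_le hT, sub_zero]

lemma pow_mul_sqNormOn_sechBump_le (ω : Set (Fin d → ℝ)) (h0 : 0 < h) (h1 : h ≤ 1)
    (hL : 0 ≤ L) (x : Fin d → ℝ) :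
    h ^ d * sqNormOn d h ω (sechBump h0 x)
      ≤ h ^ d * Nat.card {k : Fin d → ℤ // pt d h k ∈ ω ∩ Qcube d L x}
        + (Real.cosh (L / 2))⁻¹ * 8 ^ d := by
  calc _ ≤ h ^ d * (Nat.card {k : Fin d → ℤ // pt d h k ∈ ω ∩ Qcube d L x}
            + (Real.cosh (L / 2))⁻¹ * ∑' k, sechProd (pt d h k - x)) :=
        mul_le_mul_of_nonneg_left (sqNormOn_sechBump_le ω h0 hL x) (by positivity)
    _ = h ^ d * Nat.card {k : Fin d → ℤ // pt d h k ∈ ω ∩ Qcube d L x}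
          + (Real.cosh (L / 2))⁻¹ * (h ^ d * ∑' k, sechProd (pt d h k - x)) := by ring
    _ ≤ _ := by
        gcongr
        exact pow_mul_tsum_sechProd_pt_le h0 h1 x

theorem RelaxedObservable.exp_sq_le (hobs : RelaxedObservable d h ω V T C r)
    (hV : ∀ y, |V y| ≤ M) (h0 : 0 < h) (h1 : h ≤ 1) (hT : 0 ≤ T) (hC : 0 ≤ C) (hL : 0 ≤ L)
    (x : Fin d → ℝ) :
    Real.exp (-(T * (2 * d + M))) ^ 2
      ≤ C * Real.exp (T * (2 * d + M)) ^ 2 * T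
          * (h ^ d * Nat.card {k : Fin d → ℤ // pt d h k ∈ ω ∩ Qcube d L x}
            + (Real.cosh (L / 2))⁻¹ * 8 ^ d)
        + |r| * 4 ^ d := by
  obtain ⟨P, hP⟩ := exists_realizesPh (d := d) h hV
  set K : ℝ := T * (2 * d + M)
  set f := sechBump h0 x
  have mass_le_final : Real.exp (-K) ^ 2 * ‖f‖ ^ 2 ≤ ‖NormedSpace.exp ((-(T : ℂ)) • P) f‖ ^ 2 := by
    rw [← mul_pow]
    exact pow_le_pow_left₀ (by positivity) (exp_mul_norm_sechBump_le hP hV h0 h1 hT x) 2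
  have observed_le :=
    setIntegral_sqNormOn_exp_neg_smul_sechBump_le hP hV h0 h1 hT ω x
  calc Real.exp (-K) ^ 2 ≤ Real.exp (-K) ^ 2 * (h ^ d * ‖f‖ ^ 2) :=
        le_mul_of_one_le_right (by positivity) (one_le_pow_mul_norm_sechBump_sq h0 h1 x)
    _ = h ^ d * (Real.exp (-K) ^ 2 * ‖f‖ ^ 2) := by ring
    _ ≤ h ^ d * (C * (Real.exp K ^ 2 * sqNormOn d h ω f * T) + r * ‖f‖ ^ 2) := by
        refine mul_le_mul_of_nonneg_left (mass_le_final.trans ((hobs P hP f).trans ?_))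
          (by positivity)
        gcongr
    _ = C * Real.exp K ^ 2 * T * (h ^ d * sqNormOn d h ω f) + r * (h ^ d * ‖f‖ ^ 2) := by ring
    _ ≤ _ := by
        gcongr
        · exact pow_mul_sqNormOn_sechBump_le ω h0 h1 hL x
        · exact le_abs_self r
        · exact pow_mul_norm_sechBump_sq_le h0 h1 x

theorem exp_sq_le_of_frequently_relaxedObservable {r : ℝ → ℝ} {x : Fin d → ℝ}
    (hsample : Tendsto
      (fun h : ℝ => h ^ d * (Nat.card {k : Fin d → ℤ // pt d h k ∈ ω ∩ Qcube d L x} : ℝ))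
      (𝓝[>] 0) (𝓝 (volume (ω ∩ Qcube d L x)).toReal))
    (hV : ∀ y, |V y| ≤ M) (hT : 0 ≤ T) (hC : 0 ≤ C) (hL : 0 ≤ L)
    (hr : Tendsto r (𝓝[>] 0) (𝓝 0))
    (hobs : ∃ᶠ h in 𝓝[>] 0, RelaxedObservable d h ω V T C (r h)) :
    Real.exp (-(T * (2 * d + M))) ^ 2
      ≤ C * Real.exp (T * (2 * d + M)) ^ 2 * T
          * ((volume (ω ∩ Qcube d L x)).toReal + (Real.cosh (L / 2))⁻¹ * 8 ^ d) := by
  have limit := ((hsample.add_const ((Real.cosh (L / 2))⁻¹ * 8 ^ d)).const_mul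
    (C * Real.exp (T * (2 * d + M)) ^ 2 * T)).add (hr.abs.mul_const (4 ^ d))
  rw [abs_zero, zero_mul, add_zero] at limit
  refine ge_of_tendsto_of_frequently limit
    ((hobs.and_eventually (Ioc_mem_nhdsGT one_pos)).mono fun h hh => ?_)
  exact hh.1.exp_sq_le hV hh.2.1 hh.2.2 hT hC hL x

lemma exists_pos_inv_cosh_half_le {ε : ℝ} (hε : 0 < ε) : ∃ L > 0, (Real.cosh (L / 2))⁻¹ ≤ ε := by
  refine ⟨2 * ε⁻¹, by positivity, inv_le_of_inv_le₀ hε ?_⟩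
  rw [mul_div_cancel_left₀ _ two_ne_zero]
  exact (Real.self_le_sinh_iff.2 (inv_nonneg.2 hε.le)).trans (Real.sinh_lt_cosh _).le

lemma volume_Qcube_ne_top (hL : 0 ≤ L) (x : Fin d → ℝ) : volume (Qcube d L x) ≠ ⊤ := by
  have subset_closedBall : Qcube d L x ⊆ Metric.closedBall x (L / 2) := fun y hy =>
    (dist_pi_le_iff (by positivity)).2 fun i => (Real.dist_eq (y i) (x i)).trans_le (hy i)
  exact measure_ne_top_of_subset subset_closedBall measure_closedBall_lt_top.ne

lemma isThick_of_forall_le_volume {δ : ℝ} (hL : 0 < L) (hδ : 0 < δ)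
    (hω : ∀ x, δ ≤ (volume (ω ∩ Qcube d L x)).toReal) : IsThick d ω := by
  set v := (volume (Qcube d L fun _ => 0)).toReal with v_def
  have v_nonneg : 0 ≤ v := ENNReal.toReal_nonneg
  -- The denominator `v + δ` gives `γ ≤ 1` without comparing `δ` to `v`.
  refine ⟨L, hL, δ / (v + δ), by positivity, ?_, fun x => ?_⟩
  · exact div_le_one_of_le₀ (by linarith) (by positivity)
  · rw [← ENNReal.ofReal_toReal (volume_Qcube_ne_top hL.le _), ← v_def,
      ← ENNReal.ofReal_mul (by positivity)]
    refine ENNReal.ofReal_le_of_le_toReal (le_trans ?_ (hω x))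
    rw [div_mul_eq_mul_div, div_le_iff₀ (by positivity)]
    exact mul_le_mul_of_nonneg_left (by linarith) hδ.le

lemma tendsto_exp_neg_div_sq_nhdsGT_zero (hC : 0 < C) :
    Tendsto (fun h : ℝ => Real.exp (-C / h ^ 2)) (𝓝[>] 0) (𝓝 0) := by
  refine Real.tendsto_exp_atBot.comp ?_
  simp only [div_eq_mul_inv, ← inv_pow]
  exact ((tendsto_pow_atTop two_ne_zero).comp tendsto_inv_nhdsGT_zero).const_mul_atTop_of_neg
    (neg_lt_zero.2 hC)

end Thickness

theorem stmt_19_general (d : ℕ) (ω : Set (Fin d → ℝ))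
    (hsample : ∀ Λ : ℝ, 0 < Λ → ∀ x₀ : Fin d → ℝ,
      Tendsto
        (fun h : ℝ => h ^ d * (Nat.card {k : Fin d → ℤ // pt d h k ∈ ω ∩ Qcube d Λ x₀} : ℝ))
        (𝓝[>] 0) (𝓝 (volume (ω ∩ Qcube d Λ x₀)).toReal))
    (V : (Fin d → ℝ) → ℝ) (hVbdd : BddAbove (Set.range fun x => |V x|))
    (T C : ℝ) (hT : 0 < T) (hC : 0 < C) (r : ℝ → ℝ) (hr : Tendsto r (𝓝[>] 0) (𝓝 0))
    (hobs : ∃ᶠ h in 𝓝[>] 0, RelaxedObservable d h ω V T C (r h)) :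
    IsThick d ω := by
  obtain ⟨M, hM⟩ := hVbdd
  have hV (y : Fin d → ℝ) : |V y| ≤ M := hM ⟨y, rfl⟩
  set a := Real.exp (-(T * (2 * d + M))) ^ 2
  set b := C * Real.exp (T * (2 * d + M)) ^ 2 * T
  have b_pos : 0 < b := by positivity
  have δ_pos : 0 < a / b / 2 := by positivity
  obtain ⟨L, hL, tail_le⟩ := exists_pos_inv_cosh_half_le (ε := a / b / 2 / 8 ^ d) (by positivity)
  rw [le_div_iff₀ (by positivity)] at tail_le
  refine isThick_of_forall_le_volume hL δ_pos fun x => ?_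
  have := (div_le_iff₀' b_pos).2 <|
    exp_sq_le_of_frequently_relaxedObservable (hsample L hL x) hV hT.le hC.le hL.le hr hobs
  linarith

/-- Thickness is necessary for uniform observability: if the semi-discrete heat
semigroup `e^{−tP_h}` satisfies the relaxed observability inequality on `ω` uniformly
for small `h`, then `ω` is thick. -/
theorem stmt_19 (d : ℕ) (ω : Set (Fin d → ℝ)) (hωopen : IsOpen ω)
    (hsample : ∀ Λ : ℝ, 0 < Λ → ∀ x₀ : Fin d → ℝ,
      Filter.Tendsto
        (fun h : ℝ => h ^ d * (Nat.card {k : Fin d → ℤ // pt d h k ∈ ω ∩ Qcube d Λ x₀} : ℝ))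
        (nhdsWithin 0 (Set.Ioi 0))
        (nhds (volume (ω ∩ Qcube d Λ x₀)).toReal))
    (V : (Fin d → ℝ) → ℝ) (hVcont : Continuous V)
    (hVbdd : BddAbove (Set.range fun x => |V x|))
    (T h₀ C : ℝ) (hT : 0 < T) (hh₀ : 0 < h₀) (hC : 0 < C)
    (hobs : ∀ h : ℝ, 0 < h → h ≤ h₀ →
      ∀ P : Hsp d →L[ℂ] Hsp d, RealizesPh d h V P →
      ∀ u₀ : Hsp d,
        ‖NormedSpace.exp ((-(T:ℂ)) • P) u₀‖ ^ 2
          ≤ C * (∫ t in Set.Ioc (0:ℝ) T,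
                sqNormOn d h ω (NormedSpace.exp ((-(t:ℂ)) • P) u₀))
            + C * Real.exp (-C / h ^ 2) * ‖u₀‖ ^ 2) :
    ∃ L > (0:ℝ), ∃ γ : ℝ, 0 < γ ∧ γ ≤ 1 ∧
      ∀ x : Fin d → ℝ,
        ENNReal.ofReal γ * volume (Qcube d L (fun _ => 0)) ≤ volume (ω ∩ Qcube d L x) := by
  refine stmt_19_general d ω hsample V hVbdd T C hT hC (fun h => C * Real.exp (-C / h ^ 2)) ?_ ?_
  · simpa only [mul_zero] using (tendsto_exp_neg_div_sq_nhdsGT_zero hC).const_mul C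
  · refine Eventually.frequently ?_
    filter_upwards [Ioc_mem_nhdsGT hh₀] with h hh using hobs h hh.1 hh.2
end
end
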